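/- arXiv:2107.10488 — 10 statements merged into one kernel-verified Lean document; each statement's English description precedes it below -/
import Mathlib

section
/- Let X = (V,E,T) be an (s,k,K)-two-layer system with weight function w. Let A ⊆ E and U ⊆ V, and for 0 ≤ i ≤ k define A_U^i = {τ ∈ A : |U ∩ τ| = i}. Then Σ_{i=1}^{k} i·w(A_U^i) ≤ Σ_{v∈U} m_v(A_v) ≤ (s−1)·Σ_{i=1}^{k} i·w(A_U^i). In particular, Σ_{v∈U} m_v(A_v) ≤ (s−1)·k·w(A). -/
open Finset

noncomputable section
open scoped Classical

/-- Sum of edge weights between two vertex sets (over ordered pairs),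
i.e. `m(U₁,U₂)` for a weighted graph given by the symmetric kernel `m`. -/
def pairW {α : Type*} (m : α → α → ℝ) (U₁ U₂ : Finset α) : ℝ :=
  ∑ u ∈ U₁, ∑ v ∈ U₂, m u v

/-- Weighted degree `m(v)` of a vertex, relative to the vertex set `vs` of the graph. -/
def degOn {α : Type*} (m : α → α → ℝ) (vs : Finset α) (v : α) : ℝ :=
  ∑ u ∈ vs, m v u

/-- Weight `m(U)` of a set of vertices. -/
def vertOn {α : Type*} (m : α → α → ℝ) (vs : Finset α) (U : Finset α) : ℝ :=
  ∑ v ∈ U, degOn m vs v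

/-- The (generalized) Cheeger constant
`h = min over nonempty proper U ⊆ vs of m(U, vs∖U)·m(vs)/(m(U)·m(vs∖U))`. -/
def cheegerOn {α : Type*} (m : α → α → ℝ) (vs : Finset α) : ℝ :=
  sInf { x : ℝ | ∃ U : Finset α, U ⊆ vs ∧ U.Nonempty ∧ U ≠ vs ∧
    x = pairW m U (vs \ U) * vertOn m vs vs / (vertOn m vs U * vertOn m vs (vs \ U)) }

/-- A weighted graph is a `λ`-expander if `1 - h ≤ λ`. -/
def IsExpanderOn {α : Type*} (m : α → α → ℝ) (vs : Finset α) (lam : ℝ) : Prop :=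
  1 - cheegerOn m vs ≤ lam

/-- The ℓ² inner product `⟨φ,ψ⟩ = Σ_v m(v) φ(v) ψ(v)` with respect to the vertex weights. -/
def iprodK {α : Type*} [Fintype α] (m : α → α → ℝ) (φ ψ : α → ℝ) : ℝ :=
  ∑ v, (∑ u, m v u) * (φ v * ψ v)

/-- The random walk operator `Mφ(v) = (1/m(v)) Σ_u m({u,v}) φ(u)`. -/
def walkK {α : Type*} [Fintype α] (m : α → α → ℝ) (φ : α → ℝ) (v : α) : ℝ :=
  (∑ u, m v u * φ u) / (∑ u, m v u)

/-- An `(s,k,K)`-two-layer system `X = (V,E,T)`:  `E` is a set of `k`-element subsets of `V`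
covering `V`; `T` is a set of `K`-element subsets of `E` covering `E`; and for every `σ ∈ T`
and every vertex `v ∈ σ` (meaning `v ∈ τ` for some `τ ∈ σ`), `2 ≤ |{τ ∈ σ : v ∈ τ}| ≤ s`.
A positive weight function `w` on `T` is part of the data. -/
structure TwoLayer (V : Type*) [Fintype V] [DecidableEq V] where
  s : ℕ
  k : ℕ
  K : ℕ
  E : Finset (Finset V)
  T : Finset (Finset (Finset V))
  w0 : Finset (Finset V) → ℝ
  w0_pos : ∀ σ ∈ T, 0 < w0 σ
  card_of_mem_E : ∀ τ ∈ E, τ.card = k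
  cover_V : ∀ v : V, ∃ τ ∈ E, v ∈ τ
  card_of_mem_T : ∀ σ ∈ T, σ.card = K
  sub_of_mem_T : ∀ σ ∈ T, ∀ τ ∈ σ, τ ∈ E
  cover_E : ∀ τ ∈ E, ∃ σ ∈ T, τ ∈ σ
  deg_lb : ∀ σ ∈ T, ∀ v : V, (∃ τ ∈ σ, v ∈ τ) → 2 ≤ (σ.filter (fun τ => v ∈ τ)).card
  deg_ub : ∀ σ ∈ T, ∀ v : V, (∃ τ ∈ σ, v ∈ τ) → (σ.filter (fun τ => v ∈ τ)).card ≤ s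

namespace TwoLayer

variable {V : Type*} [Fintype V] [DecidableEq V] (X : TwoLayer V)

/-- The induced weight `w(τ) = Σ_{σ ∈ T, τ ∈ σ} w(σ)` of `τ ∈ E`. -/
def wE (τ : Finset V) : ℝ := ∑ σ ∈ X.T.filter (fun σ => τ ∈ σ), X.w0 σ

/-- The induced weight `w(v) = Σ_{σ ∈ T, v ∈ σ} w(σ)` of a vertex `v ∈ V`. -/
def wV (v : V) : ℝ := ∑ σ ∈ X.T.filter (fun σ => ∃ τ ∈ σ, v ∈ τ), X.w0 σ

/-- `w(A)` for `A ⊆ E`. -/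
def wSet (A : Finset (Finset V)) : ℝ := ∑ τ ∈ A, X.wE τ

/-- `w(U)` for `U ⊆ V`. -/
def wVSet (U : Finset V) : ℝ := ∑ v ∈ U, X.wV v

/-- `w(S)` for `S ⊆ T`. -/
def wT (S : Finset (Finset (Finset V))) : ℝ := ∑ σ ∈ S, X.w0 σ

/-- The weight kernel of the ground graph:
`m_gr({u,v}) = Σ_{τ ∈ E, u,v ∈ τ} w(τ)` for `u ≠ v`. -/
def mGr (u v : V) : ℝ :=
  if u = v then 0 else ∑ τ ∈ X.E.filter (fun τ => u ∈ τ ∧ v ∈ τ), X.wE τ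

/-- `E_v = {τ ∈ E : v ∈ τ}`, the vertex set of the link of `v`. -/
def Ev (v : V) : Finset (Finset V) := X.E.filter (fun τ => v ∈ τ)

/-- The weight kernel of the link of `v`:
`m_v({τ,τ'}) = Σ_{σ ∈ T, τ,τ' ∈ σ} w(σ)` for `τ ≠ τ'` in `E_v`. -/
def mLk (v : V) (τ τ' : Finset V) : ℝ :=
  if τ ≠ τ' ∧ τ ∈ X.Ev v ∧ τ' ∈ X.Ev v then
    ∑ σ ∈ X.T.filter (fun σ => τ ∈ σ ∧ τ' ∈ σ), X.w0 σ
  else 0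

/-- `m_v(B)` for a set `B ⊆ E_v` of vertices of the link of `v`. -/
def mLkSet (v : V) (B : Finset (Finset V)) : ℝ := vertOn (X.mLk v) (X.Ev v) B

/-- `τ ↔ τ'` : `τ,τ' ∈ E` are disjoint and contained in a common `σ ∈ T`. -/
def nintAdj (τ τ' : Finset V) : Prop :=
  τ ∈ X.E ∧ τ' ∈ X.E ∧ τ ∩ τ' = ∅ ∧ ∃ σ ∈ X.T, τ ∈ σ ∧ τ' ∈ σ

/-- The weight kernel of the non-intersecting graph. -/
def mNint (τ τ' : Finset V) : ℝ :=
  if X.nintAdj τ τ' then ∑ σ ∈ X.T.filter (fun σ => τ ∈ σ ∧ τ' ∈ σ), X.w0 σ else 0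

/-- The set of vertices that are `δ`-large with respect to `A ⊆ E`, i.e. those with
`m_v(A_v)/m_v(E_v) ≥ δ`. -/
def VLarge (A : Finset (Finset V)) (δ : ℝ) : Finset V :=
  Finset.univ.filter (fun v => δ ≤ X.mLkSet v (A ∩ X.Ev v) / X.mLkSet v (X.Ev v))

/-- `|{τ' ∈ σ : τ ↔ τ'}|`. -/
def nintCount (τ : Finset V) (σ : Finset (Finset V)) : ℕ :=
  (σ.filter (fun τ' => X.nintAdj τ τ')).card

/-- The set of values `|{τ' ∈ σ : τ ↔ τ'}|` over `τ ∈ E` and `σ ∈ T` with `τ ∈ σ`. -/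
def QSet : Set ℕ := { n | ∃ τ ∈ X.E, ∃ σ ∈ X.T, τ ∈ σ ∧ n = X.nintCount τ σ }

/-- `Q_nint^max`. -/
def Qmax : ℕ := sSup X.QSet

/-- `Q_nint^min`. -/
def Qmin : ℕ := sInf X.QSet

/-- The regularity constant `R_nint = Q_nint^min / Q_nint^max`. -/
def Rnint : ℝ := (X.Qmin : ℝ) / (X.Qmax : ℝ)

end TwoLayer

theorem TwoLayer.deg_eq {V : Type*} [Fintype V] [DecidableEq V] (X : TwoLayer V) (v : V)
    (τ : Finset V) (hτ : τ ∈ X.Ev v) :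
    degOn (X.mLk v) (X.Ev v) τ
      = ∑ σ ∈ X.T.filter (fun σ => τ ∈ σ),
          (((σ.filter (fun τ => v ∈ τ)).card : ℝ) - 1) * X.w0 σ := by
  have h1 : ∀ τ' ∈ X.Ev v, X.mLk v τ τ' =
      ∑ σ ∈ X.T.filter (fun σ => τ ∈ σ), if τ ≠ τ' ∧ τ' ∈ σ then X.w0 σ else 0 := by
    intro τ' hτ'
    unfold TwoLayer.mLk
    by_cases h : τ = τ'
    · simp [h]
    · rw [if_pos ⟨h, hτ, hτ'⟩, ← Finset.filter_filter, Finset.sum_filter]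
      simp [h]
  unfold degOn
  rw [Finset.sum_congr rfl h1, Finset.sum_comm]
  refine Finset.sum_congr rfl fun σ hσ => ?_
  rw [Finset.mem_filter] at hσ
  rw [← Finset.sum_filter, Finset.sum_const, nsmul_eq_mul]
  congr 1
  have hvτ : v ∈ τ := (Finset.mem_filter.1 hτ).2
  have h2 : (X.Ev v).filter (fun τ' => τ ≠ τ' ∧ τ' ∈ σ)
      = (σ.filter (fun τ => v ∈ τ)).erase τ := by
    ext τ'
    have := X.sub_of_mem_T σ hσ.1 τ'
    simp only [TwoLayer.Ev, Finset.mem_filter, Finset.mem_erase]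
    constructor
    · rintro ⟨⟨a, b⟩, c, d⟩
      exact ⟨fun h => c h.symm, d, b⟩
    · rintro ⟨a, b, c⟩
      exact ⟨⟨this b, c⟩, fun h => a h.symm, b⟩
  have hm : τ ∈ σ.filter (fun τ => v ∈ τ) := Finset.mem_filter.2 ⟨hσ.2, hvτ⟩
  have h3 := Finset.card_erase_add_one hm
  rw [h2, ← h3]
  push_cast
  ring

theorem TwoLayer.deg_bounds {V : Type*} [Fintype V] [DecidableEq V] (X : TwoLayer V) (v : V)
    (τ : Finset V) (hτ : τ ∈ X.Ev v) :
    X.wE τ ≤ degOn (X.mLk v) (X.Ev v) τ ∧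
      degOn (X.mLk v) (X.Ev v) τ ≤ ((X.s : ℝ) - 1) * X.wE τ := by
  have hvτ : v ∈ τ := (Finset.mem_filter.1 hτ).2
  rw [X.deg_eq v τ hτ]
  unfold TwoLayer.wE
  rw [Finset.mul_sum]
  constructor
  · refine Finset.sum_le_sum fun σ hσ => ?_
    rw [Finset.mem_filter] at hσ
    have h := X.deg_lb σ hσ.1 v ⟨τ, hσ.2, hvτ⟩
    have h' : (2 : ℝ) ≤ ((σ.filter (fun τ => v ∈ τ)).card : ℝ) := by exact_mod_cast h
    nlinarith [X.w0_pos σ hσ.1]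
  · refine Finset.sum_le_sum fun σ hσ => ?_
    rw [Finset.mem_filter] at hσ
    have h := X.deg_ub σ hσ.1 v ⟨τ, hσ.2, hvτ⟩
    have h' : ((σ.filter (fun τ => v ∈ τ)).card : ℝ) ≤ X.s := by exact_mod_cast h
    nlinarith [X.w0_pos σ hσ.1]

theorem TwoLayer.sum_layers {V : Type*} [Fintype V] [DecidableEq V] (X : TwoLayer V)
    (A : Finset (Finset V)) (hA : A ⊆ X.E) (U : Finset V) :
    (∑ i ∈ Finset.Icc 1 X.k, (i : ℝ) * X.wSet (A.filter (fun τ => (U ∩ τ).card = i)))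
      = ∑ τ ∈ A, ((U ∩ τ).card : ℝ) * X.wE τ := by
  have : ∀ i ∈ Finset.Icc 1 X.k,
      (i : ℝ) * X.wSet (A.filter (fun τ => (U ∩ τ).card = i))
        = ∑ τ ∈ A, if (U ∩ τ).card = i then (i : ℝ) * X.wE τ else 0 := by
    intro i _
    unfold TwoLayer.wSet
    rw [Finset.mul_sum, Finset.sum_filter]
  rw [Finset.sum_congr rfl this, Finset.sum_comm]
  refine Finset.sum_congr rfl fun τ hτ => ?_
  rw [Finset.sum_ite_eq]
  split_ifs with h
  · rfl
  · have h1 : (U ∩ τ).card ≤ X.k := by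
      rw [← X.card_of_mem_E τ (hA hτ)]
      exact Finset.card_le_card Finset.inter_subset_right
    have h0 : (U ∩ τ).card = 0 := by
      rw [Finset.mem_Icc] at h
      omega
    simp [h0]

theorem TwoLayer.sum_verts {V : Type*} [Fintype V] [DecidableEq V] (X : TwoLayer V)
    (A : Finset (Finset V)) (hA : A ⊆ X.E) (U : Finset V) :
    (∑ τ ∈ A, ((U ∩ τ).card : ℝ) * X.wE τ)
      = ∑ v ∈ U, ∑ τ ∈ A ∩ X.Ev v, X.wE τ := by
  have h : ∀ v ∈ U, ∑ τ ∈ A ∩ X.Ev v, X.wE τ = ∑ τ ∈ A, if v ∈ τ then X.wE τ else 0 := by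
    intro v _
    rw [← Finset.sum_filter]
    refine Finset.sum_congr ?_ fun _ _ => rfl
    ext τ
    simp only [TwoLayer.Ev, Finset.mem_inter, Finset.mem_filter]
    exact ⟨fun h => ⟨h.1, h.2.2⟩, fun h => ⟨h.1, hA h.1, h.2⟩⟩
  rw [Finset.sum_congr rfl h, Finset.sum_comm]
  refine Finset.sum_congr rfl fun τ _ => ?_
  rw [← Finset.sum_filter, Finset.sum_const, nsmul_eq_mul, Finset.filter_mem_eq_inter]

/-- Proposition 2.8: for `A ⊆ E` and `U ⊆ V`, with
`A_U^i = {τ ∈ A : |U ∩ τ| = i}`,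
`Σ_{i=1}^k i·w(A_U^i) ≤ Σ_{v ∈ U} m_v(A_v) ≤ (s-1)·Σ_{i=1}^k i·w(A_U^i)`;
in particular `Σ_{v ∈ U} m_v(A_v) ≤ (s-1)·k·w(A)`. -/
theorem stmt3 {V : Type*} [Fintype V] [DecidableEq V] (X : TwoLayer V)
    (A : Finset (Finset V)) (hA : A ⊆ X.E) (U : Finset V) :
    ((∑ i ∈ Finset.Icc 1 X.k, (i : ℝ) * X.wSet (A.filter (fun τ => (U ∩ τ).card = i)))
        ≤ ∑ v ∈ U, X.mLkSet v (A ∩ X.Ev v) ∧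
      (∑ v ∈ U, X.mLkSet v (A ∩ X.Ev v))
        ≤ ((X.s : ℝ) - 1) *
            ∑ i ∈ Finset.Icc 1 X.k, (i : ℝ) * X.wSet (A.filter (fun τ => (U ∩ τ).card = i))) ∧
    (∑ v ∈ U, X.mLkSet v (A ∩ X.Ev v)) ≤ ((X.s : ℝ) - 1) * (X.k : ℝ) * X.wSet A := by
  have hw : ∀ τ, 0 ≤ X.wE τ := fun τ => Finset.sum_nonneg fun σ hσ =>
    (X.w0_pos σ (Finset.mem_filter.1 hσ).1).le
  have hlow : (∑ v ∈ U, ∑ τ ∈ A ∩ X.Ev v, X.wE τ) ≤ ∑ v ∈ U, X.mLkSet v (A ∩ X.Ev v) :=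
    Finset.sum_le_sum fun v _ => Finset.sum_le_sum fun τ hτ =>
      (X.deg_bounds v τ (Finset.mem_inter.1 hτ).2).1
  have hup : (∑ v ∈ U, X.mLkSet v (A ∩ X.Ev v))
      ≤ ((X.s : ℝ) - 1) * ∑ v ∈ U, ∑ τ ∈ A ∩ X.Ev v, X.wE τ := by
    rw [Finset.mul_sum]
    refine Finset.sum_le_sum fun v _ => ?_
    rw [Finset.mul_sum]
    exact Finset.sum_le_sum fun τ hτ => (X.deg_bounds v τ (Finset.mem_inter.1 hτ).2).2
  rw [X.sum_layers A hA U]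
  refine ⟨⟨?_, ?_⟩, ?_⟩
  · rw [X.sum_verts A hA U]; exact hlow
  · rw [X.sum_verts A hA U]; exact hup
  · refine hup.trans ?_
    rw [← X.sum_verts A hA U, mul_assoc]
    unfold TwoLayer.wSet
    rw [Finset.mul_sum, Finset.mul_sum, Finset.mul_sum]
    refine Finset.sum_le_sum fun τ hτ => ?_
    have hk := X.card_of_mem_E τ (hA hτ)
    have h1 : (U ∩ τ).card ≤ X.k := by
      rw [← hk]
      exact Finset.card_le_card Finset.inter_subset_right
    rcases Nat.eq_zero_or_pos X.k with h0 | h0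
    · have : (U ∩ τ).card = 0 := by omega
      simp [this, h0]
    · obtain ⟨v, hv⟩ := Finset.card_pos.1 (hk.symm ▸ h0 : 0 < τ.card)
      obtain ⟨σ, hσ, hτσ⟩ := X.cover_E τ (hA hτ)
      have hs : 2 ≤ X.s := (X.deg_lb σ hσ v ⟨τ, hτσ, hv⟩).trans (X.deg_ub σ hσ v ⟨τ, hτσ, hv⟩)
      have hs' : (2 : ℝ) ≤ X.s := by exact_mod_cast hs
      have h1' : ((U ∩ τ).card : ℝ) ≤ X.k := by exact_mod_cast h1
      exact mul_le_mul_of_nonneg_left (mul_le_mul_of_nonneg_right h1' (hw τ)) (by linarith)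
end
end

section
/- Let X = (V,E,T) be an (s,k,K)-two-layer system and let C ⊆ 𝔽_p^V be a linear code modelled over X via constraints 𝓔 and linear dependencies 𝓣. Assume X has the ((δ,α),ε₀)-unique neighbor expansion property. If c ∈ 𝔽_p^V is such that for some 0 < ε < ε₀ one has w(A(c))/w(E) ≤ ε and A(c) is (δ,α)-locally small, then c ∈ C. -/
open Finset

noncomputable section
open scoped Classical

/-- The support of a constraint (or of a word) `e ∈ 𝔽_p^V`. -/
def suppF {V F : Type*} [Fintype V] [DecidableEq V] [Zero F] (e : V → F) : Finset V :=
  Finset.univ.filter (fun v => e v ≠ 0)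

/-- The dot product `e · c = Σ_v e(v) c(v)`. -/
def dotF {V F : Type*} [Fintype V] [NonUnitalNonAssocSemiring F] (e c : V → F) : F :=
  ∑ v, e v * c v

/-- The normalized weighted norm `‖x‖ = (1/w(V)) Σ_{v, x(v) ≠ 0} w(v)` on `𝔽_p^V`. -/
def TwoLayer.normW {V : Type*} [Fintype V] [DecidableEq V] (X : TwoLayer V)
    {F : Type*} [Zero F] (x : V → F) : ℝ :=
  (∑ v ∈ Finset.univ.filter (fun v => x v ≠ 0), X.wV v) / X.wVSet Finset.univ

/-- Lemma 3.4: if `X` has the `((δ,α),ε₀)`-unique neighbor expansion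
property and `c ∈ 𝔽_p^V` satisfies `w(A(c))/w(E) ≤ ε` for some `0 < ε < ε₀` with `A(c)`
being `(δ,α)`-locally small, then `c` belongs to the code modelled over `X`. -/
theorem stmt4 {V F : Type*} [Fintype V] [DecidableEq V] [Field F] [Fintype F]
    (X : TwoLayer V)
    (Ecal : Finset (V → F)) (Tcal : Finset ((V → F) → F))
    (hsupp : ∀ e ∈ Ecal, suppF e ∈ X.E)
    (hinj : ∀ e₁ ∈ Ecal, ∀ e₂ ∈ Ecal, suppF e₁ = suppF e₂ → e₁ = e₂)
    (hsurj : ∀ τ ∈ X.E, ∃ e ∈ Ecal, suppF e = τ)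
    (hld : ∀ ld ∈ Tcal, ∀ c : V → F, ∑ e ∈ Ecal, ld e * dotF e c = 0)
    (hT : X.T = Tcal.image (fun ld => (Ecal.filter (fun e => ld e ≠ 0)).image suppF))
    (δ α ε₀ : ℝ)
    (hune : ∀ A ⊆ X.E, A.Nonempty → X.wSet A / X.wSet X.E < ε₀ →
      (∑ v ∈ X.VLarge A δ, X.mLkSet v (A ∩ X.Ev v)) ≤ α * X.wSet A →
      ∃ σ ∈ X.T, (σ ∩ A).card = 1)
    (c : V → F) (ε : ℝ) (hε : 0 < ε) (hεε₀ : ε < ε₀)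
    (hsmall : X.wSet ((Ecal.filter (fun e => dotF e c ≠ 0)).image suppF) / X.wSet X.E ≤ ε)
    (hls : (∑ v ∈ X.VLarge ((Ecal.filter (fun e => dotF e c ≠ 0)).image suppF) δ,
        X.mLkSet v (((Ecal.filter (fun e => dotF e c ≠ 0)).image suppF) ∩ X.Ev v))
      ≤ α * X.wSet ((Ecal.filter (fun e => dotF e c ≠ 0)).image suppF)) :
    ∀ e ∈ Ecal, dotF e c = 0 := by
  intro e₀ he₀
  by_contra hne
  obtain ⟨σ, hσ, hcard⟩ := hune ((Ecal.filter (fun e => dotF e c ≠ 0)).image suppF)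
    (by
      intro τ hτ
      obtain ⟨e, he, rfl⟩ := Finset.mem_image.1 hτ
      exact hsupp e (Finset.mem_filter.1 he).1)
    ⟨suppF e₀, Finset.mem_image_of_mem _ (Finset.mem_filter.2 ⟨he₀, hne⟩)⟩
    (lt_of_le_of_lt hsmall hεε₀) hls
  rw [hT] at hσ
  obtain ⟨ld, hl, rfl⟩ := Finset.mem_image.1 hσ
  obtain ⟨τ, hτ⟩ := Finset.card_eq_one.1 hcard
  have hmem := Finset.mem_singleton_self τ
  rw [← hτ, Finset.mem_inter] at hmem
  obtain ⟨e₁, he₁, h1⟩ := Finset.mem_image.1 hmem.1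
  obtain ⟨e₂, he₂, h2⟩ := Finset.mem_image.1 hmem.2
  rw [Finset.mem_filter] at he₁ he₂
  obtain rfl := hinj e₁ he₁.1 e₂ he₂.1 (h1.trans h2.symm)
  have hsum := hld ld hl c
  rw [Finset.sum_eq_single_of_mem e₁ he₁.1] at hsum
  · exact mul_ne_zero he₁.2 he₂.2 hsum
  · intro b hb hbne
    by_contra hb0
    apply hbne
    apply hinj b hb e₁ he₁.1
    rw [h1, ← Finset.mem_singleton, ← hτ, Finset.mem_inter]
    exact ⟨Finset.mem_image_of_mem _ (Finset.mem_filter.2 ⟨hb, left_ne_zero_of_mul hb0⟩),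
      Finset.mem_image_of_mem _ (Finset.mem_filter.2 ⟨hb, right_ne_zero_of_mul hb0⟩)⟩
end
end

section
/- (Cheeger inequality for weighted graphs.) Let (V,E) be a connected finite weighted graph with weight function m, and let λ be such that ⟨Mφ,φ⟩ ≤ λ·‖φ‖² for every φ ∈ ℓ²(V) orthogonal to the constant function (in particular this holds when λ is the second largest eigenvalue of the random walk operator M). Then h_G ≥ 1 − λ. -/
open Finset

noncomputable section
open scoped Classical

lemma key_aux {α : Type*} [Fintype α] (m : α → α → ℝ)
    (hsymm : ∀ u v : α, m u v = m v u)
    (hpos : ∀ v : α, 0 < ∑ u, m v u)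
    (lam : ℝ)
    (hspec : ∀ φ : α → ℝ, iprodK m φ (fun _ => 1) = 0 →
      iprodK m (walkK m φ) φ ≤ lam * iprodK m φ φ)
    (U W : Finset α) (hU : U.Nonempty) (hWn : W.Nonempty)
    (hd : ∀ v ∈ W, v ∉ U)
    (hW : ∀ f : α → ℝ, ∑ v, f v = ∑ v ∈ U, f v + ∑ v ∈ W, f v) :
    1 - lam ≤ pairW m U W * vertOn m univ univ / (vertOn m univ U * vertOn m univ W) := by
  have ha : 0 < vertOn m univ U := Finset.sum_pos (fun v _ => hpos v) hU
  have hb : 0 < vertOn m univ W := Finset.sum_pos (fun v _ => hpos v) hWn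
  have hab : vertOn m univ univ = vertOn m univ U + vertOn m univ W := hW _
  have hC : pairW m W U = pairW m U W := by
    unfold pairW
    rw [Finset.sum_comm]
    exact Finset.sum_congr rfl fun u _ => Finset.sum_congr rfl fun v _ => hsymm _ _
  have hA : vertOn m univ U = pairW m U U + pairW m U W := by
    unfold vertOn degOn pairW
    rw [← Finset.sum_add_distrib]
    exact Finset.sum_congr rfl fun u _ => hW _
  have hB : vertOn m univ W = pairW m U W + pairW m W W := by
    rw [← hC]
    unfold vertOn degOn pairW
    rw [← Finset.sum_add_distrib]
    exact Finset.sum_congr rfl fun u _ => hW _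
  have hsum : ∀ (c d : ℝ), ∑ v ∈ U, (∑ u, m v u) * c + ∑ v ∈ W, (∑ u, m v u) * d
      = vertOn m univ U * c + vertOn m univ W * d := by
    intro c d
    rw [← Finset.sum_mul, ← Finset.sum_mul]; rfl
  generalize hae : vertOn m univ U = a at *
  generalize hbe : vertOn m univ W = b at *
  let φ : α → ℝ := fun v => if v ∈ U then b else -a
  have hφU : ∀ v ∈ U, φ v = b := fun v hv => if_pos hv
  have hφW : ∀ v ∈ W, φ v = -a := fun v hv => if_neg (hd v hv)
  have hip : ∀ F : ℝ → ℝ, ∑ v, (∑ u, m v u) * F (φ v) = a * F b + b * F (-a) := by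
    intro F
    rw [hW, ← hsum]
    congr 1
    · exact Finset.sum_congr rfl fun v hv => by rw [hφU v hv]
    · exact Finset.sum_congr rfl fun v hv => by rw [hφW v hv]
  have h1 : iprodK m φ (fun _ => 1) = 0 := by
    have := hip (fun x => x * 1)
    unfold iprodK
    rw [this]; ring
  have h2 : iprodK m φ φ = a * b ^ 2 + b * a ^ 2 := by
    have := hip (fun x => x * x)
    unfold iprodK
    rw [this]; ring
  have hin : ∀ v, ∑ u, m v u * φ u = (∑ u ∈ U, m v u) * b + (∑ u ∈ W, m v u) * (-a) := by
    intro v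
    rw [hW, Finset.sum_mul, Finset.sum_mul]
    congr 1
    · exact Finset.sum_congr rfl fun v hv => by rw [hφU v hv]
    · exact Finset.sum_congr rfl fun v hv => by rw [hφW v hv]
  have h3 : iprodK m (walkK m φ) φ
      = (pairW m U U * b + pairW m U W * (-a)) * b
        + (pairW m W U * b + pairW m W W * (-a)) * (-a) := by
    have e : iprodK m (walkK m φ) φ
        = ∑ v, ((∑ u ∈ U, m v u) * b + (∑ u ∈ W, m v u) * (-a)) * φ v := by
      unfold iprodK walkK
      refine Finset.sum_congr rfl fun v _ => ?_
      rw [hin, ← mul_assoc, mul_div_cancel₀ _ (hpos v).ne']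
    rw [e, hW]
    unfold pairW
    simp only [Finset.sum_mul, ← Finset.sum_add_distrib]
    congr 1
    · exact Finset.sum_congr rfl fun v hv => by rw [hφU v hv]
    · exact Finset.sum_congr rfl fun v hv => by rw [hφW v hv]
  have h := hspec φ h1
  rw [h2, h3, hC] at h
  rw [hab, le_div_iff₀ (mul_pos ha hb)]
  have hs : 0 < a + b := add_pos ha hb
  refine le_of_mul_le_mul_right ?_ hs
  have e1 : pairW m U U = a - pairW m U W := by linarith
  have e2 : pairW m W W = b - pairW m U W := by linarith
  rw [e1, e2] at h
  nlinarith [h]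

/-- Theorem 4.4(1), Cheeger inequality for weighted graphs: if
`⟨Mφ,φ⟩ ≤ λ‖φ‖²` for every `φ` orthogonal to the constants, then `h_G ≥ 1 - λ`. -/
theorem stmt9 {α : Type*} [Fintype α] [DecidableEq α] [Nontrivial α] (m : α → α → ℝ)
    (hsymm : ∀ u v : α, m u v = m v u) (hnonneg : ∀ u v : α, 0 ≤ m u v)
    (hdiag : ∀ v : α, m v v = 0)
    (hconn : (SimpleGraph.fromRel (fun u v => m u v ≠ 0)).Connected)
    (lam : ℝ)
    (hspec : ∀ φ : α → ℝ, iprodK m φ (fun _ => 1) = 0 →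
      iprodK m (walkK m φ) φ ≤ lam * iprodK m φ φ) :
    1 - lam ≤ cheegerOn m Finset.univ := by
  have hpos : ∀ v : α, 0 < ∑ u, m v u := by
    intro v
    obtain ⟨w, hw⟩ := hconn.preconnected.exists_adj_of_nontrivial v
    rw [SimpleGraph.fromRel_adj] at hw
    have hne : m v w ≠ 0 := by
      rcases hw.2 with h | h
      · exact h
      · rwa [hsymm]
    exact Finset.sum_pos' (fun u _ => hnonneg v u)
      ⟨w, Finset.mem_univ w, lt_of_le_of_ne (hnonneg v w) hne.symm⟩
  unfold cheegerOn
  apply le_csInf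
  · obtain ⟨x, y, hxy⟩ := exists_pair_ne α
    refine ⟨_, {x}, Finset.subset_univ _, Finset.singleton_nonempty x, ?_, rfl⟩
    intro h
    have : y ∈ ({x} : Finset α) := h ▸ Finset.mem_univ y
    exact hxy (Finset.mem_singleton.1 this).symm
  · rintro _ ⟨U, -, hU, hne, rfl⟩
    rename_i i1 i2 i3
    clear i2
    refine key_aux m hsymm hpos lam hspec U _ hU ?_ ?_ ?_
    · rw [Finset.sdiff_nonempty]
      exact fun h => hne (Finset.Subset.antisymm (Finset.subset_univ _) h)
    · intro v hv
      exact (Finset.mem_sdiff.1 hv).2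
    · intro f
      rw [add_comm]
      exact (Finset.sum_sdiff (Finset.subset_univ U)).symm
end
end

section
/- (Alon–Chung lemma for weighted graphs.) Let (V,E) be a connected finite weighted graph with weight function m, and let λ be such that ⟨Mφ,φ⟩ ≤ λ·‖φ‖² for every φ ∈ ℓ²(V) orthogonal to the constant function (in particular this holds when λ is the second largest eigenvalue of the random walk operator M). Then for every nonempty proper subset U ⊊ V, m(U)·(λ + (1−λ)·m(U)/m(V)) ≥ m(U,U). -/
open Finset

noncomputable section
open scoped Classical

/-- Theorem 4.4(2), Alon–Chung lemma for weighted graphs: if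
`⟨Mφ,φ⟩ ≤ λ‖φ‖²` for every `φ` orthogonal to the constants, then for every nonempty
proper `U ⊊ V`, `m(U)·(λ + (1-λ)·m(U)/m(V)) ≥ m(U,U)`. -/
theorem stmt10 {α : Type*} [Fintype α] [DecidableEq α] (m : α → α → ℝ)
    (hsymm : ∀ u v : α, m u v = m v u) (hnonneg : ∀ u v : α, 0 ≤ m u v)
    (hdiag : ∀ v : α, m v v = 0)
    (hconn : (SimpleGraph.fromRel (fun u v => m u v ≠ 0)).Connected)
    (lam : ℝ)
    (hspec : ∀ φ : α → ℝ, iprodK m φ (fun _ => 1) = 0 →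
      iprodK m (walkK m φ) φ ≤ lam * iprodK m φ φ)
    (U : Finset α) (hU : U.Nonempty) (hUproper : U ≠ Finset.univ) :
    pairW m U U ≤
      vertOn m Finset.univ U *
        (lam + (1 - lam) * (vertOn m Finset.univ U / vertOn m Finset.univ Finset.univ)) := by
  have hdeg : ∀ v, 0 ≤ ∑ u, m v u := fun v => Finset.sum_nonneg fun u _ => hnonneg v u
  obtain ⟨χ, hχ, hs⟩ : ∃ χ : α → ℝ, (∀ v, χ v * χ v = χ v) ∧
      ∀ f : α → ℝ, ∑ v ∈ U, f v = ∑ v, f v * χ v := by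
    refine ⟨fun v => if v ∈ U then 1 else 0, fun v => by by_cases h : v ∈ U <;> simp [h],
      fun f => by simp [Finset.sum_ite_mem]⟩
  have hP : pairW m U U = ∑ v, ∑ u, m v u * χ u * χ v := by
    unfold pairW
    rw [hs]
    refine Finset.sum_congr rfl fun v _ => ?_
    rw [hs, Finset.sum_mul]
  have hS : vertOn m Finset.univ U = ∑ v, (∑ u, m v u) * χ v := by
    unfold vertOn degOn
    rw [hs]
  have hT : vertOn m Finset.univ Finset.univ = ∑ v, ∑ u, m v u := rfl
  have hT0 : 0 ≤ vertOn m Finset.univ Finset.univ := by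
    rw [hT]; exact Finset.sum_nonneg fun v _ => hdeg v
  have hS' : ∑ v, ∑ u, m v u * χ u = vertOn m Finset.univ U := by
    rw [hS, Finset.sum_comm]
    refine Finset.sum_congr rfl fun v _ => ?_
    rw [Finset.sum_mul]
    exact Finset.sum_congr rfl fun u _ => by rw [hsymm]
  have hST : vertOn m Finset.univ U ≤ vertOn m Finset.univ Finset.univ :=
    Finset.sum_le_sum_of_subset_of_nonneg (Finset.subset_univ U) fun v _ _ => hdeg v
  have hS0 : 0 ≤ vertOn m Finset.univ U := Finset.sum_nonneg fun v _ => hdeg v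
  have hPS : pairW m U U ≤ vertOn m Finset.univ U :=
    Finset.sum_le_sum fun v _ =>
      Finset.sum_le_sum_of_subset_of_nonneg (Finset.subset_univ U) fun u _ _ => hnonneg v u
  have hw : ∀ φ v, (∑ u, m v u) * walkK m φ v = ∑ u, m v u * φ u := by
    intro φ v
    unfold walkK
    by_cases h : ∑ u, m v u = 0
    · have h2 := (Finset.sum_eq_zero_iff_of_nonneg fun u _ => hnonneg v u).1 h
      rw [h, zero_mul]
      exact (Finset.sum_eq_zero fun u hu => by rw [h2 u hu, zero_mul]).symm
    · field_simp
  generalize hSd : vertOn m Finset.univ U = S at *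
  generalize hTd : vertOn m Finset.univ Finset.univ = T at *
  generalize hPd : pairW m U U = P at *
  rcases hT0.eq_or_lt with h0 | hpos
  · have : S = 0 := by linarith
    subst this
    simpa using hPS
  have h1 : iprodK m (fun v => T * χ v - S) (fun _ => 1) = 0 := by
    have : iprodK m (fun v => T * χ v - S) (fun _ => 1)
        = T * (∑ v, (∑ u, m v u) * χ v) - S * ∑ v, ∑ u, m v u := by
      unfold iprodK
      rw [Finset.mul_sum, Finset.mul_sum, ← Finset.sum_sub_distrib]
      exact Finset.sum_congr rfl fun v _ => by ring
    rw [this, ← hS, ← hT]; ring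
  have h2 : iprodK m (fun v => T * χ v - S) (fun v => T * χ v - S) = T ^ 2 * S - T * S ^ 2 := by
    have : iprodK m (fun v => T * χ v - S) (fun v => T * χ v - S)
        = (T ^ 2 - 2 * T * S) * (∑ v, (∑ u, m v u) * χ v) + S ^ 2 * ∑ v, ∑ u, m v u := by
      unfold iprodK
      rw [Finset.mul_sum, Finset.mul_sum, ← Finset.sum_add_distrib]
      exact Finset.sum_congr rfl fun v _ => by
        linear_combination (∑ u, m v u) * T ^ 2 * hχ v
    rw [this, ← hS, ← hT]; ring
  have h3 : iprodK m (walkK m (fun v => T * χ v - S)) (fun v => T * χ v - S)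
      = T ^ 2 * P - T * S ^ 2 := by
    have : iprodK m (walkK m (fun v => T * χ v - S)) (fun v => T * χ v - S)
        = T ^ 2 * (∑ v, ∑ u, m v u * χ u * χ v) - T * S * (∑ v, ∑ u, m v u * χ u)
          - T * S * (∑ v, (∑ u, m v u) * χ v) + S ^ 2 * ∑ v, ∑ u, m v u := by
      unfold iprodK
      simp only [← mul_assoc, hw]
      simp only [Finset.mul_sum, Finset.sum_mul, ← Finset.sum_add_distrib,
        ← Finset.sum_sub_distrib]
      exact Finset.sum_congr rfl fun v _ => Finset.sum_congr rfl fun u _ => by ring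
    rw [this, ← hS, ← hT, ← hP, hS']; ring
  have h4 := hspec _ h1
  rw [h2, h3] at h4
  have h5 : T * P - S ^ 2 ≤ lam * (T * S - S ^ 2) := by
    refine le_of_mul_le_mul_left ?_ hpos
    linarith
  have h6 : S * (lam + (1 - lam) * (S / T)) = (lam * (T * S - S ^ 2) + S ^ 2) / T := by
    field_simp
    ring
  rw [h6, le_div_iff₀ hpos]
  linarith
end
end

section
/- Let G = (V,E) be a finite weighted graph with weight function m and let 0 ≤ β < 1 be a constant. If for every vertex v ∈ V one has m(v) ≥ (max_{e'∈E} m(e'))·(1−β)·|V|, then h_G ≥ 1 − 2β, i.e. G is a 2β-expander. -/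
open Finset

noncomputable section
open scoped Classical

theorem half_bound {α : Type*} [Fintype α] (m : α → α → ℝ) (U W : Finset α)
    (hd : Disjoint U W) (hu : ∀ x, x ∈ U ∨ x ∈ W) (M c : ℝ) (hc : 0 ≤ c)
    (hM : ∀ u v, m u v ≤ M) (hdeg : ∀ v, M * c ≤ degOn m Finset.univ v) :
    vertOn m Finset.univ U * (c - U.card) ≤ c * pairW m U W := by
  classical
  have huni : (Finset.univ : Finset α) = U ∪ W := by
    ext x; simpa using hu x
  have h1 : vertOn m Finset.univ U = pairW m U U + pairW m U W := by
    unfold vertOn pairW degOn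
    rw [← Finset.sum_add_distrib]
    refine Finset.sum_congr rfl fun v _ => ?_
    rw [huni, Finset.sum_union hd]
  have h2 : pairW m U U ≤ U.card * (U.card * M) := by
    unfold pairW
    have : ∀ u ∈ U, ∑ v ∈ U, m u v ≤ U.card * M := fun u _ => by
      simpa using Finset.sum_le_card_nsmul U (fun v => m u v) M (fun v _ => hM u v)
    simpa using Finset.sum_le_card_nsmul U _ _ this
  have h3 : (U.card : ℝ) * (M * c) ≤ vertOn m Finset.univ U := by
    unfold vertOn
    simpa using Finset.card_nsmul_le_sum U _ (M * c) (fun v _ => hdeg v)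
  have h4 := mul_le_mul_of_nonneg_left h2 hc
  have h5 := mul_le_mul_of_nonneg_left h3 (Nat.cast_nonneg (α := ℝ) U.card)
  have h6 : c * vertOn m Finset.univ U = c * pairW m U U + c * pairW m U W := by
    rw [h1]; ring
  nlinarith

/-- Lemma 4.5, almost complete graphs: if every vertex satisfies
`m(v) ≥ (max_{e' ∈ E} m(e'))·(1-β)·|V|` (with `0 ≤ β < 1`), then `h_G ≥ 1 - 2β`,
i.e. `G` is a `2β`-expander. -/
theorem stmt11 {α : Type*} [Fintype α] [DecidableEq α] (m : α → α → ℝ)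
    (hsymm : ∀ u v : α, m u v = m v u) (hnonneg : ∀ u v : α, 0 ≤ m u v)
    (hdiag : ∀ v : α, m v v = 0)
    (hedge : ∃ u v : α, m u v ≠ 0)
    (β : ℝ) (hβ0 : 0 ≤ β) (hβ1 : β < 1)
    (hdeg : ∀ v u w : α, m u w * ((1 - β) * (Fintype.card α : ℝ)) ≤ degOn m Finset.univ v) :
    1 - 2 * β ≤ cheegerOn m Finset.univ := by
  obtain ⟨u0, v0, h0⟩ := hedge
  have : Nonempty (α × α) := ⟨(u0, v0)⟩
  obtain ⟨⟨p, q⟩, hpq⟩ := Finite.exists_max (fun x : α × α => m x.1 x.2)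
  have hM : ∀ u v, m u v ≤ m p q := fun u v => hpq (u, v)
  have hMpos : 0 < m p q :=
    lt_of_lt_of_le (lt_of_le_of_ne (hnonneg u0 v0) (Ne.symm h0)) (hM u0 v0)
  have hne : u0 ≠ v0 := by
    rintro rfl; exact h0 (hdiag _)
  have hn : (0 : ℝ) < Fintype.card α := by
    have : 0 < Fintype.card α := Fintype.card_pos_iff.2 ⟨u0⟩
    exact_mod_cast this
  have hcpos : 0 < (1 - β) * (Fintype.card α : ℝ) := mul_pos (by linarith) hn
  have hdpos : ∀ v, 0 < degOn m Finset.univ v := fun v =>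
    lt_of_lt_of_le (mul_pos hMpos hcpos) (hdeg v p q)
  unfold cheegerOn
  apply le_csInf
  · refine ⟨_, {u0}, Finset.subset_univ _, Finset.singleton_nonempty _, ?_, rfl⟩
    intro h
    have : v0 ∈ ({u0} : Finset α) := by rw [h]; exact Finset.mem_univ _
    exact hne (Finset.mem_singleton.1 this).symm
  · rintro x ⟨U, -, hU, hU', rfl⟩
    generalize hW : @SDiff.sdiff (Finset α) (@Finset.instSDiff α (fun a b => Classical.propDecidable (a = b))) Finset.univ U = W
    have hmem : ∀ x, x ∈ W ↔ x ∉ U := by intro x; rw [← hW]; simp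
    have hd : Disjoint U W := by
      rw [Finset.disjoint_left]; intro x hx hx'; exact (hmem x).1 hx' hx
    have hu : ∀ x, x ∈ U ∨ x ∈ W := by
      intro x; rw [hmem]; exact em _
    have hWne : W.Nonempty := by
      by_contra h
      rw [Finset.not_nonempty_iff_eq_empty] at h
      apply hU'
      ext x
      have := hu x
      simpa [h] using this
    have huni : (Finset.univ : Finset α) = U ∪ W := by
      ext x; simpa using hu x
    have hcard : (Fintype.card α : ℝ) = U.card + W.card := by
      rw [← Finset.card_univ, huni, Finset.card_union_of_disjoint hd]; push_cast; rfl
    have hsum : vertOn m Finset.univ Finset.univ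
        = vertOn m Finset.univ U + vertOn m Finset.univ W := by
      unfold vertOn
      rw [← Finset.sum_union hd, ← huni]
    have hA : 0 < vertOn m Finset.univ U := Finset.sum_pos (fun v _ => hdpos v) hU
    have hB : 0 < vertOn m Finset.univ W := Finset.sum_pos (fun v _ => hdpos v) hWne
    have e1 := half_bound m U W hd hu _ _ hcpos.le hM (fun v => hdeg v p q)
    have e2 := half_bound m W U hd.symm (fun x => (hu x).symm) _ _ hcpos.le hM
      (fun v => hdeg v p q)
    have hcomm : pairW m W U = pairW m U W := by
      unfold pairW
      rw [Finset.sum_comm]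
      exact Finset.sum_congr rfl fun _ _ => Finset.sum_congr rfl fun _ _ => hsymm _ _
    have hP : 0 ≤ pairW m U W :=
      Finset.sum_nonneg fun _ _ => Finset.sum_nonneg fun _ _ => hnonneg _ _
    rw [hcomm] at e2
    rw [hsum, le_div_iff₀ (mul_pos hA hB)]
    generalize vertOn m Finset.univ U = A at *
    generalize vertOn m Finset.univ W = B at *
    generalize pairW m U W = P at *
    generalize (Fintype.card α : ℝ) = n at *
    have f1 := mul_le_mul_of_nonneg_right e1 hB.le
    have f2 := mul_le_mul_of_nonneg_right e2 hA.le
    have f3 : 0 ≤ β * n * (P * (A + B)) := by positivity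
    have f4 : n * ((1 - 2 * β) * (A * B)) ≤ n * (P * (A + B)) := by
      have : A * ((1 - β) * n - U.card) * B + B * ((1 - β) * n - W.card) * A
          = n * ((1 - 2 * β) * (A * B)) := by
        have : (W.card : ℝ) = n - U.card := by linarith
        rw [this]; ring
      linarith
    exact le_of_mul_le_mul_left f4 hn
end
end

section
/- Let G' = (V',E',m') and G = (V,E,m) be finite weighted graphs such that G' is a weak cover of G. Then h_G ≥ h_{G'}. -/
open Finset

noncomputable section
open scoped Classical

theorem pairW_pull {α α' : Type*} [Fintype α'] (m : α → α → ℝ) (m' : α' → α' → ℝ) (p : α' → α)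
    (hweight : ∀ u v : α, m u v =
      ∑ u' ∈ Finset.univ.filter (fun x => p x = u),
        ∑ v' ∈ Finset.univ.filter (fun x => p x = v), m' u' v') (U W : Finset α) :
    pairW m U W = pairW m' (Finset.univ.filter (fun x => p x ∈ U))
      (Finset.univ.filter (fun x => p x ∈ W)) := by
  have key : ∀ (S : Finset α) (f : α' → ℝ),
      ∑ u ∈ S, ∑ x ∈ Finset.univ.filter (fun x => p x = u), f x
        = ∑ x ∈ Finset.univ.filter (fun x => p x ∈ S), f x := by
    intro S f
    rw [← Finset.sum_fiberwise_of_maps_to (s := Finset.univ.filter (fun x => p x ∈ S)) (t := S)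
      (g := p) (by simp)]
    refine Finset.sum_congr rfl fun u hu => Finset.sum_congr ?_ fun _ _ => rfl
    ext x
    simp only [Finset.mem_filter, Finset.mem_univ, true_and]
    constructor
    · rintro rfl
      exact ⟨hu, rfl⟩
    · exact fun h => h.2
  unfold pairW
  rw [← key]
  refine Finset.sum_congr rfl fun u _ => ?_
  simp_rw [← key W]
  rw [Finset.sum_comm]
  refine Finset.sum_congr rfl fun v _ => ?_
  rw [hweight]

theorem vertOn_eq_pairW {α : Type*} (m : α → α → ℝ) (vs U : Finset α) :
    vertOn m vs U = pairW m U vs := rfl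

/-- Proposition 4.7: if the weighted graph `G'` (kernel `m'`) is a weak
cover of the weighted graph `G` (kernel `m`), then `h_G ≥ h_{G'}`. -/
theorem stmt12 {α α' : Type*} [Fintype α] [DecidableEq α] [Fintype α'] [DecidableEq α']
    (m : α → α → ℝ) (m' : α' → α' → ℝ)
    (hsymm : ∀ u v : α, m u v = m v u) (hnonneg : ∀ u v : α, 0 ≤ m u v)
    (hdiag : ∀ v : α, m v v = 0)
    (hsymm' : ∀ u v : α', m' u v = m' v u) (hnonneg' : ∀ u v : α', 0 ≤ m' u v)
    (hdiag' : ∀ v : α', m' v v = 0)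
    (p : α' → α) (hpsurj : Function.Surjective p)
    (hedgemap : ∀ u' v' : α', m' u' v' ≠ 0 → m (p u') (p v') ≠ 0)
    (hedgesurj : ∀ u v : α, m u v ≠ 0 → ∃ u' v' : α', p u' = u ∧ p v' = v ∧ m' u' v' ≠ 0)
    (hweight : ∀ u v : α, m u v =
      ∑ u' ∈ Finset.univ.filter (fun x => p x = u),
        ∑ v' ∈ Finset.univ.filter (fun x => p x = v), m' u' v') :
    cheegerOn m' Finset.univ ≤ cheegerOn m Finset.univ := by
  have pull := pairW_pull m m' p (by intro u v; rw [hweight]; congr!)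
  by_cases hα : Subsingleton α
  · have hm' : ∀ u v, m' u v = 0 := by
      intro u v
      by_contra h
      apply hedgemap u v h
      rw [Subsingleton.elim (p u) (p v)]
      exact hdiag _
    have hm : ∀ u v, m u v = 0 := by
      intro u v
      rw [Subsingleton.elim u v]
      exact hdiag _
    have z' : cheegerOn m' Finset.univ ≤ 0 := by
      apply Real.sInf_nonpos
      rintro x ⟨U, -, -, -, rfl⟩
      simp [pairW, hm']
    have z : 0 ≤ cheegerOn m Finset.univ := by
      apply Real.sInf_nonneg
      rintro x ⟨U, -, -, -, rfl⟩
      simp [pairW, hm]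
    exact z'.trans z
  · rw [not_subsingleton_iff_nontrivial] at hα
    obtain ⟨a, b, hab⟩ := exists_pair_ne α
    unfold cheegerOn
    refine le_csInf ⟨_, {a}, Finset.subset_univ _, Finset.singleton_nonempty a, ?_, rfl⟩ ?_
    · intro h
      have := Finset.mem_univ b
      rw [← h, Finset.mem_singleton] at this
      exact hab this.symm
    rintro x ⟨U, -, ⟨u, hu⟩, hne, rfl⟩
    apply csInf_le
    · refine ⟨0, ?_⟩
      rintro x ⟨U, -, -, -, rfl⟩
      have h0 : ∀ A B : Finset α', 0 ≤ pairW m' A B := fun A B =>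
        Finset.sum_nonneg fun _ _ => Finset.sum_nonneg fun _ _ => hnonneg' _ _
      simp only [vertOn_eq_pairW]
      exact div_nonneg (mul_nonneg (h0 _ _) (h0 _ _)) (mul_nonneg (h0 _ _) (h0 _ _))
    refine ⟨Finset.univ.filter (fun x => p x ∈ U), Finset.subset_univ _, ?_, ?_, ?_⟩
    · obtain ⟨u', rfl⟩ := hpsurj u
      exact ⟨u', by simpa using hu⟩
    · intro h
      apply hne
      ext v
      obtain ⟨v', rfl⟩ := hpsurj v
      have := Finset.mem_univ v'
      rw [← h] at this
      simpa using this
    · simp only [vertOn_eq_pairW, pull]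
      congr! 3 <;> (ext x; simp)
end
end

section
/- (Ground graph lemma.) Let λ_gr ≥ 0 and let X be an (s,k,K)-two-layer system whose ground graph is a λ_gr-expander. Let A ⊆ E be nonempty, 0 < μ < 1, and U ⊆ V_{μ-large} (with respect to A). For 0 ≤ i ≤ k set A_U^i = {τ ∈ A : |τ ∩ U| = i}. If w(A)/w(E) ≤ 4μ²/(s³(s−1)²), then (s(s−1)(k−1)/(2μ))·λ_gr + (s³(s−1)²/(4μ²))·(w(A)/w(E)) ≥ (1 − (s(s−1)(k−1)/(2μ))·λ_gr) · Σ_{i=2}^{k} (i−1)·w(A_U^i)/w(A). -/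
open Finset

noncomputable section
open scoped Classical

namespace TwoLayer

variable {V : Type*} [Fintype V] [DecidableEq V] (X : TwoLayer V)

theorem wE_nonneg (τ : Finset V) : 0 ≤ X.wE τ := by
  unfold wE
  exact Finset.sum_nonneg fun σ hσ => (X.w0_pos σ (Finset.mem_filter.1 hσ).1).le

theorem wE_pos {τ : Finset V} (h : τ ∈ X.E) : 0 < X.wE τ := by
  unfold wE
  obtain ⟨σ, hσ, hτ⟩ := X.cover_E τ h
  exact Finset.sum_pos (fun σ hσ => (X.w0_pos σ (Finset.mem_filter.1 hσ).1))
    ⟨σ, Finset.mem_filter.2 ⟨hσ, hτ⟩⟩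

theorem mGr_nonneg (u v : V) : 0 ≤ X.mGr u v := by
  unfold mGr
  split_ifs
  · exact le_rfl
  · exact Finset.sum_nonneg fun τ _ => X.wE_nonneg τ

theorem mGr_eq (u v : V) : X.mGr u v = ∑ τ ∈ X.E, X.wE τ *
    ((if u ∈ τ then 1 else 0) * (if v ∈ τ then 1 else 0)
      - (if u = v then (if u ∈ τ then 1 else 0) else 0)) := by
  unfold mGr
  by_cases h : u = v
  · subst h
    simp only [if_true]
    symm
    refine Finset.sum_eq_zero fun τ _ => ?_
    by_cases h1 : u ∈ τ <;> simp [h1]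
  · simp only [h, if_false, Finset.sum_filter]
    refine Finset.sum_congr rfl fun τ _ => ?_
    by_cases h1 : u ∈ τ <;> by_cases h2 : v ∈ τ <;> simp [h1, h2]

theorem pairW_eq (U₁ U₂ : Finset V) : pairW X.mGr U₁ U₂ =
    ∑ τ ∈ X.E, X.wE τ * (((τ ∩ U₁).card : ℝ) * ((τ ∩ U₂).card : ℝ)
      - ((τ ∩ (U₁ ∩ U₂)).card : ℝ)) := by
  have hc : ∀ (τ W : Finset V), ((τ ∩ W).card : ℝ) = ∑ u ∈ W, if u ∈ τ then 1 else 0 := by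
    intro τ W
    rw [Finset.sum_boole, Finset.inter_comm, Finset.filter_mem_eq_inter]
  unfold pairW
  simp only [mGr_eq]
  have h1 : ∀ u ∈ U₁, (∑ v ∈ U₂, ∑ τ ∈ X.E, X.wE τ *
    (((if u ∈ τ then 1 else 0) * (if v ∈ τ then 1 else 0) : ℝ)
      - (if u = v then (if u ∈ τ then 1 else 0) else 0))) = ∑ τ ∈ X.E, ∑ v ∈ U₂, X.wE τ *
    ((if u ∈ τ then 1 else 0) * (if v ∈ τ then 1 else 0)
      - (if u = v then (if u ∈ τ then 1 else 0) else 0)) := fun u _ => Finset.sum_comm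
  rw [Finset.sum_congr rfl h1, Finset.sum_comm]
  refine Finset.sum_congr rfl fun τ _ => ?_
  simp only [← Finset.mul_sum, Finset.sum_sub_distrib]
  congr 2
  · rw [← Finset.sum_mul, hc, hc]
  · rw [hc]
    simp only [Finset.sum_ite_eq]
    rw [← Finset.sum_filter, Finset.filter_mem_eq_inter]

theorem vertOn_eq (U : Finset V) : vertOn X.mGr Finset.univ U = pairW X.mGr U Finset.univ := rfl

theorem pairW_nonneg (U₁ U₂ : Finset V) : 0 ≤ pairW X.mGr U₁ U₂ :=
  Finset.sum_nonneg fun _ _ => Finset.sum_nonneg fun _ _ => X.mGr_nonneg _ _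

theorem vertOn_eq' (U : Finset V) : vertOn X.mGr Finset.univ U =
    ((X.k : ℝ) - 1) * ∑ τ ∈ X.E, X.wE τ * ((τ ∩ U).card : ℝ) := by
  rw [vertOn_eq, pairW_eq, Finset.mul_sum]
  refine Finset.sum_congr rfl fun τ hτ => ?_
  simp only [Finset.inter_univ, X.card_of_mem_E τ hτ]
  ring

theorem vertOn_univ : vertOn X.mGr Finset.univ Finset.univ =
    ((X.k : ℝ) - 1) * (X.k * X.wSet X.E) := by
  rw [vertOn_eq', wSet, Finset.mul_sum X.E _ (X.k : ℝ)]
  congr 1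
  refine Finset.sum_congr rfl fun τ hτ => ?_
  simp only [Finset.inter_univ, X.card_of_mem_E τ hτ]
  ring

theorem expander_bound (lam : ℝ) (hl : 0 ≤ lam)
    (hexp : IsExpanderOn X.mGr Finset.univ lam) (U : Finset V) (hU : U.Nonempty) :
    pairW X.mGr U U * vertOn X.mGr Finset.univ Finset.univ ≤
      lam * vertOn X.mGr Finset.univ U * vertOn X.mGr Finset.univ Finset.univ
        + vertOn X.mGr Finset.univ U ^ 2 := by
  have hM0 : 0 ≤ vertOn X.mGr Finset.univ Finset.univ := by
    rw [vertOn_eq]; exact X.pairW_nonneg _ _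
  have hm0 : 0 ≤ vertOn X.mGr Finset.univ U := by
    rw [vertOn_eq]; exact X.pairW_nonneg _ _
  have hmc0 : 0 ≤ vertOn X.mGr Finset.univ (Finset.univ \ U) := by
    rw [vertOn_eq]; exact X.pairW_nonneg _ _
  have hsplit : pairW X.mGr U U + pairW X.mGr U (Finset.univ \ U)
      = vertOn X.mGr Finset.univ U := by
    rw [vertOn_eq]
    unfold pairW
    rw [← Finset.sum_add_distrib]
    refine Finset.sum_congr rfl fun u _ => ?_
    rw [add_comm]
    exact Finset.sum_sdiff (Finset.subset_univ U)
  have hsplit2 : vertOn X.mGr Finset.univ U + vertOn X.mGr Finset.univ (Finset.univ \ U)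
      = vertOn X.mGr Finset.univ Finset.univ := by
    unfold vertOn
    rw [add_comm]
    exact Finset.sum_sdiff (Finset.subset_univ U)
  have hp0 := X.pairW_nonneg U (Finset.univ \ U)
  by_cases hUu : U = Finset.univ
  · rw [hUu, ← vertOn_eq]
    rw [hUu] at hm0
    have : 0 ≤ lam * vertOn X.mGr Finset.univ Finset.univ * vertOn X.mGr Finset.univ Finset.univ :=
      by positivity
    nlinarith
  have hch : cheegerOn X.mGr Finset.univ ≤ pairW X.mGr U (Finset.univ \ U) *
      vertOn X.mGr Finset.univ Finset.univ /
      (vertOn X.mGr Finset.univ U * vertOn X.mGr Finset.univ (Finset.univ \ U)) := by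
    unfold cheegerOn
    refine csInf_le ⟨0, ?_⟩ ⟨U, Finset.subset_univ _, hU, hUu, by congr!⟩
    rintro x ⟨W, -, -, -, rfl⟩
    exact div_nonneg (mul_nonneg (X.pairW_nonneg _ _) hM0)
      (mul_nonneg (X.pairW_nonneg _ _) (X.pairW_nonneg _ _))
  unfold IsExpanderOn at hexp
  generalize vertOn X.mGr Finset.univ Finset.univ = M at *
  generalize vertOn X.mGr Finset.univ U = m at *
  generalize vertOn X.mGr Finset.univ (Finset.univ \ U) = mc at *
  generalize pairW X.mGr U (Finset.univ \ U) = p at *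
  generalize pairW X.mGr U U = q at *
  have hq : q = m - p := by linarith
  rcases le_or_gt 1 lam with h | h
  · have h1 : q * M ≤ m * M := by nlinarith
    have h2 : 1 * (m * M) ≤ lam * (m * M) := by
      apply mul_le_mul_of_nonneg_right h; positivity
    nlinarith [sq_nonneg m]
  · have h1 : 0 < p * M / (m * mc) := by linarith
    have h2 : 0 < m * mc := by
      rcases (mul_nonneg hm0 hmc0).lt_or_eq with h2 | h2
      · exact h2
      · rw [← h2] at h1; simp at h1
    have h3 : 1 - lam ≤ p * M / (m * mc) := by linarith
    rw [le_div_iff₀ h2] at h3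
    have h4 : mc = M - m := by linarith
    subst hq
    subst h4
    nlinarith [mul_nonneg hl (sq_nonneg m)]

theorem degLk (v : V) (τ : Finset V) (hτ : τ ∈ X.Ev v) :
    degOn (X.mLk v) (X.Ev v) τ = ∑ σ ∈ X.T.filter (fun σ => τ ∈ σ),
      X.w0 σ * (((σ.filter (fun τ => v ∈ τ)).card : ℝ) - 1) := by
  have h1 : ∀ τ' ∈ X.Ev v, X.mLk v τ τ' = ∑ σ ∈ X.T.filter (fun σ => τ ∈ σ),
      X.w0 σ * ((if τ' ∈ σ then 1 else 0) - (if τ = τ' then 1 else 0)) := by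
    intro τ' hτ'
    unfold mLk
    by_cases h : τ = τ'
    · subst h
      simp only [ne_eq, not_true, false_and, if_false]
      symm
      refine Finset.sum_eq_zero fun σ hσ => ?_
      simp [(Finset.mem_filter.1 hσ).2]
    · simp only [ne_eq, h, not_false_eq_true, hτ, hτ', and_self, if_true, if_false, sub_zero,
        mul_ite, mul_one, mul_zero]
      rw [← Finset.sum_filter, Finset.filter_filter]
  unfold degOn
  rw [Finset.sum_congr rfl h1, Finset.sum_comm]
  refine Finset.sum_congr rfl fun σ hσ => ?_
  rw [← Finset.mul_sum, Finset.sum_sub_distrib, Finset.sum_boole, Finset.sum_ite_eq]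
  simp only [hτ, if_true]
  congr 4
  ext τ'
  simp only [Finset.mem_filter, Ev]
  constructor
  · rintro ⟨⟨_, h⟩, h'⟩; exact ⟨h', h⟩
  · rintro ⟨h', h⟩
    exact ⟨⟨X.sub_of_mem_T σ (Finset.mem_filter.1 hσ).1 τ' h', h⟩, h'⟩

theorem degLk_lb (v : V) (τ : Finset V) (hτ : τ ∈ X.Ev v) :
    X.wE τ ≤ degOn (X.mLk v) (X.Ev v) τ := by
  rw [degLk X v τ hτ, wE]
  refine Finset.sum_le_sum fun σ hσ => ?_
  obtain ⟨hσ, hτσ⟩ := Finset.mem_filter.1 hσ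
  have h := X.deg_lb σ hσ v ⟨τ, hτσ, (Finset.mem_filter.1 hτ).2⟩
  have h' : (2 : ℝ) ≤ ((σ.filter (fun τ => v ∈ τ)).card : ℝ) := by exact_mod_cast h
  have := X.w0_pos σ hσ
  nlinarith

theorem degLk_ub (v : V) (τ : Finset V) (hτ : τ ∈ X.Ev v) :
    degOn (X.mLk v) (X.Ev v) τ ≤ ((X.s : ℝ) - 1) * X.wE τ := by
  rw [degLk X v τ hτ, wE, Finset.mul_sum]
  refine Finset.sum_le_sum fun σ hσ => ?_
  obtain ⟨hσ, hτσ⟩ := Finset.mem_filter.1 hσ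
  have h := X.deg_ub σ hσ v ⟨τ, hτσ, (Finset.mem_filter.1 hτ).2⟩
  have h' : ((σ.filter (fun τ => v ∈ τ)).card : ℝ) ≤ X.s := by exact_mod_cast h
  have := X.w0_pos σ hσ
  nlinarith

theorem large_bound (A : Finset (Finset V)) (hAE : A ⊆ X.E) (μ : ℝ) (hμ : 0 < μ) (v : V)
    (hv : v ∈ X.VLarge A μ) :
    μ * ∑ τ ∈ X.E.filter (fun τ => v ∈ τ), X.wE τ ≤
      ((X.s : ℝ) - 1) * ∑ τ ∈ A.filter (fun τ => v ∈ τ), X.wE τ := by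
  have h := (Finset.mem_filter.1 hv).2
  have hE : ∑ τ ∈ X.E.filter (fun τ => v ∈ τ), X.wE τ ≤ X.mLkSet v (X.Ev v) := by
    unfold mLkSet vertOn
    exact Finset.sum_le_sum fun τ hτ => X.degLk_lb v τ hτ
  have hA : X.mLkSet v (A ∩ X.Ev v) ≤
      ((X.s : ℝ) - 1) * ∑ τ ∈ A.filter (fun τ => v ∈ τ), X.wE τ := by
    have : A.filter (fun τ => v ∈ τ) = A ∩ X.Ev v := by
      ext τ
      simp only [Finset.mem_filter, Finset.mem_inter, Ev]
      constructor
      · rintro ⟨a, b⟩; exact ⟨a, hAE a, b⟩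
      · rintro ⟨a, _, b⟩; exact ⟨a, b⟩
    rw [this, Finset.mul_sum]
    unfold mLkSet vertOn
    exact Finset.sum_le_sum fun τ hτ => X.degLk_ub v τ (Finset.mem_inter.1 hτ).2
  have h0 : 0 ≤ X.mLkSet v (X.Ev v) :=
    le_trans (Finset.sum_nonneg fun τ _ => X.wE_nonneg τ) hE
  have hpos : 0 < X.mLkSet v (X.Ev v) := by
    rcases h0.lt_or_eq with h2 | h2
    · exact h2
    · rw [← h2] at h; simp at h; linarith
  rw [le_div_iff₀ hpos] at h
  nlinarith

theorem sum_card_swap (B : Finset (Finset V)) (U : Finset V) :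
    ∑ τ ∈ B, X.wE τ * ((τ ∩ U).card : ℝ) = ∑ v ∈ U, ∑ τ ∈ B.filter (fun τ => v ∈ τ), X.wE τ := by
  simp only [Finset.sum_filter]
  rw [Finset.sum_comm]
  refine Finset.sum_congr rfl fun τ _ => ?_
  rw [← Finset.sum_filter, Finset.sum_const, Finset.filter_mem_eq_inter, Finset.inter_comm,
    nsmul_eq_mul, mul_comm]

theorem sum_fiber (A : Finset (Finset V)) (hAE : A ⊆ X.E) (U : Finset V) :
    ∑ i ∈ Finset.Icc 2 X.k, ((i : ℝ) - 1) * X.wSet (A.filter (fun τ => (τ ∩ U).card = i)) =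
      ∑ τ ∈ A, X.wE τ * (((τ ∩ U).card - 1 : ℕ) : ℝ) := by
  simp only [wSet, Finset.sum_filter, Finset.mul_sum]
  rw [Finset.sum_comm]
  refine Finset.sum_congr rfl fun τ hτ => ?_
  simp only [mul_ite, mul_zero, Finset.sum_ite_eq]
  have hk : (τ ∩ U).card ≤ X.k := by
    rw [← X.card_of_mem_E τ (hAE hτ)]
    exact Finset.card_le_card Finset.inter_subset_left
  split_ifs with h
  · rw [Finset.mem_Icc] at h
    rw [Nat.cast_sub (by omega)]
    push_cast
    ring
  · rw [Finset.mem_Icc] at h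
    have : (τ ∩ U).card - 1 = 0 := by omega
    rw [this]; simp

end TwoLayer

theorem final_ineq (S N W P b c d l : ℝ) (hS : 0 ≤ S) (hN : 0 < N) (hW : 0 < W)
    (hd : 0 ≤ d) (hc : 0 ≤ c) (hl : 0 ≤ l) (hb0 : 0 ≤ b)
    (hb : b ≤ c * (N + S)) (hP : S ^ 2 + S * N ≤ P * N)
    (hPW : P * W ≤ l * d * b * W + b ^ 2) (hδ : c ^ 2 * (N / W) ≤ 1 / 2) :
    S / N ≤ l * d * c * (1 + S / N) + 2 * (c ^ 2 * (N / W)) := by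
  obtain ⟨x, rfl⟩ : ∃ x, S = x * N := ⟨S / N, by field_simp⟩
  have hx : 0 ≤ x := nonneg_of_mul_nonneg_left hS hN
  have e1 : x * N / N = x := by field_simp
  rw [e1]
  set δ := c ^ 2 * (N / W) with hδd
  have hδ0 : 0 ≤ δ := by positivity
  have hb2 : b ^ 2 ≤ (c * (N + x * N)) ^ 2 := pow_le_pow_left₀ hb0 hb 2
  have h1 : P * W ≤ l * d * (c * (N + x * N)) * W + (c * (N + x * N)) ^ 2 := by
    have : l * d * b * W ≤ l * d * (c * (N + x * N)) * W := by gcongr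
    linarith
  have h2 : (x ^ 2 + x) * N ≤ P := by
    have : (x ^ 2 + x) * N * N ≤ P * N := by nlinarith
    exact le_of_mul_le_mul_right this hN
  have h3 : x ^ 2 + x ≤ l * d * c * (1 + x) + δ * (1 + x) ^ 2 := by
    have h4 : (x ^ 2 + x) * (N * W) ≤ (l * d * c * (1 + x) + δ * (1 + x) ^ 2) * (N * W) := by
      have e : (l * d * c * (1 + x) + δ * (1 + x) ^ 2) * (N * W)
        = l * d * (c * (N + x * N)) * W + (c * (N + x * N)) ^ 2 := by
        rw [hδd]; field_simp
      rw [e]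
      nlinarith
    exact le_of_mul_le_mul_right h4 (by positivity)
  have h5 : 0 ≤ (1 - 2 * δ) * x ^ 2 := mul_nonneg (by linarith) (sq_nonneg x)
  have h6 : 0 ≤ δ * (x - 1) ^ 2 := by positivity
  nlinarith

theorem final_arith (s L D x : ℝ) (hs : 2 ≤ s) (hs3 : 8 ≤ s ^ 3) (hL : 0 ≤ L) (hD : 0 ≤ D)
    (hx : 0 ≤ x) (key : x ≤ L * (1 + x) + 2 * D) :
    (1 - s / 2 * L) * x ≤ s / 2 * L + s ^ 3 / 4 * D := by
  have h1 : 1 * (L * (1 + x)) ≤ s / 2 * (L * (1 + x)) :=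
    mul_le_mul_of_nonneg_right (by linarith) (by positivity)
  have h2 : 2 * D ≤ s ^ 3 / 4 * D := mul_le_mul_of_nonneg_right (by linarith) hD
  have e : (1 - s / 2 * L) * x = x - s / 2 * (L * (1 + x)) + s / 2 * L := by ring
  rw [e]
  linarith

/-- Lemma 4.9, ground graph lemma. -/
theorem stmt13 {V : Type*} [Fintype V] [DecidableEq V] (X : TwoLayer V)
    (lamgr : ℝ) (hlamgr : 0 ≤ lamgr)
    (hexp : IsExpanderOn X.mGr Finset.univ lamgr)
    (A : Finset (Finset V)) (hAE : A ⊆ X.E) (hA : A.Nonempty)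
    (μ : ℝ) (hμ0 : 0 < μ) (hμ1 : μ < 1)
    (U : Finset V) (hU : U ⊆ X.VLarge A μ)
    (hsmall : X.wSet A / X.wSet X.E ≤ 4 * μ ^ 2 / ((X.s : ℝ) ^ 3 * ((X.s : ℝ) - 1) ^ 2)) :
    (1 - (X.s : ℝ) * ((X.s : ℝ) - 1) * ((X.k : ℝ) - 1) / (2 * μ) * lamgr) *
        ∑ i ∈ Finset.Icc 2 X.k,
          ((i : ℝ) - 1) * X.wSet (A.filter (fun τ => (τ ∩ U).card = i)) / X.wSet A
      ≤ (X.s : ℝ) * ((X.s : ℝ) - 1) * ((X.k : ℝ) - 1) / (2 * μ) * lamgr +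
          (X.s : ℝ) ^ 3 * ((X.s : ℝ) - 1) ^ 2 / (4 * μ ^ 2) * (X.wSet A / X.wSet X.E) := by
  
  have hWpos : 0 < X.wSet X.E :=
    Finset.sum_pos (fun τ h => X.wE_pos h) (hA.mono hAE)
  have hNpos : 0 < X.wSet A := Finset.sum_pos (fun τ h => X.wE_pos (hAE h)) hA
  obtain ⟨τ₀, hτ₀⟩ := hA
  have hτE := hAE hτ₀
  -- k = 0 is vacuous
  have hk : 1 ≤ X.k := by
    by_contra hk
    have hk0 : X.k = 0 := by omega
    have hE : X.E = A := by
      refine (Finset.Subset.antisymm hAE fun τ hτ => ?_).symm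
      have h1 := X.card_of_mem_E τ hτ
      have h2 := X.card_of_mem_E τ₀ hτE
      rw [hk0, Finset.card_eq_zero] at h1 h2
      rw [h1, ← h2]; exact hτ₀
    rw [hE, div_self hNpos.ne'] at hsmall
    rcases Nat.lt_or_ge X.s 2 with h | h
    · have : (X.s : ℝ) ^ 3 * ((X.s : ℝ) - 1) ^ 2 = 0 := by
        interval_cases X.s <;> norm_num
      rw [this] at hsmall
      norm_num at hsmall
    · have h' : (2 : ℝ) ≤ X.s := by exact_mod_cast h
      have h3 : (2 : ℝ) ^ 3 ≤ (X.s : ℝ) ^ 3 := by gcongr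
      have h4 : (1 : ℝ) ^ 2 ≤ ((X.s : ℝ) - 1) ^ 2 := by gcongr; linarith
      have h5 : (8 : ℝ) ≤ (X.s : ℝ) ^ 3 * ((X.s : ℝ) - 1) ^ 2 := by nlinarith
      rw [le_div_iff₀ (by linarith)] at hsmall
      nlinarith
  have hs : 2 ≤ X.s := by
    have : 0 < τ₀.card := by rw [X.card_of_mem_E τ₀ hτE]; omega
    obtain ⟨v, hv⟩ := Finset.card_pos.1 this
    obtain ⟨σ, hσ, h⟩ := X.cover_E τ₀ hτE
    exact le_trans (X.deg_lb σ hσ v ⟨τ₀, h, hv⟩) (X.deg_ub σ hσ v ⟨τ₀, h, hv⟩)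
  have hs' : (2 : ℝ) ≤ X.s := by exact_mod_cast hs
  have hk' : (1 : ℝ) ≤ X.k := by exact_mod_cast hk
  rw [← Finset.sum_div, X.sum_fiber A hAE U]
  have hs1 : 0 ≤ (X.s : ℝ) - 1 := by linarith
  have hk1 : 0 ≤ (X.k : ℝ) - 1 := by linarith
  set f : Finset V → ℝ := fun τ => (((τ ∩ U).card - 1 : ℕ) : ℝ) with hf
  set S := ∑ τ ∈ A, X.wE τ * (((τ ∩ U).card - 1 : ℕ) : ℝ) with hSdef
  have hS0 : 0 ≤ S := Finset.sum_nonneg fun τ _ => mul_nonneg (X.wE_nonneg τ) (Nat.cast_nonneg _)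
  have hRHS : 0 ≤ (X.s : ℝ) * ((X.s : ℝ) - 1) * ((X.k : ℝ) - 1) / (2 * μ) * lamgr +
          (X.s : ℝ) ^ 3 * ((X.s : ℝ) - 1) ^ 2 / (4 * μ ^ 2) * (X.wSet A / X.wSet X.E) := by
    positivity
  by_cases hSz : S = 0
  · rw [hSz]; simpa using hRHS
  have hUne : U.Nonempty := by
    rw [Finset.nonempty_iff_ne_empty]
    rintro rfl
    exact hSz (by rw [hSdef]; simp)
  have hk2 : 0 < (X.k : ℝ) - 1 := by
    rcases hk1.lt_or_eq with h | h
    · exact h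
    · exfalso
      apply hSz
      rw [hSdef]
      refine Finset.sum_eq_zero fun τ hτ => ?_
      have h1 : (τ ∩ U).card ≤ X.k := by
        rw [← X.card_of_mem_E τ (hAE hτ)]
        exact Finset.card_le_card Finset.inter_subset_left
      have h2 : X.k = 1 := by
        have : (X.k : ℝ) = 1 := by linarith
        exact_mod_cast this
      have : (τ ∩ U).card - 1 = 0 := by omega
      rw [this]; simp
  have hkpos : 0 < (X.k : ℝ) := by linarith
  have hexpb := X.expander_bound lamgr hlamgr hexp U hUne
  rw [X.vertOn_univ, X.vertOn_eq'] at hexpb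
  set b := ∑ τ ∈ X.E, X.wE τ * ((τ ∩ U).card : ℝ) with hbdef
  have hb0 : 0 ≤ b := Finset.sum_nonneg fun τ _ => mul_nonneg (X.wE_nonneg τ) (Nat.cast_nonneg _)
  have hnn : ∀ n : ℕ, (n : ℝ) * n - n = ((n - 1 : ℕ) : ℝ) ^ 2 + ((n - 1 : ℕ) : ℝ) := by
    intro n
    cases n with
    | zero => simp
    | succ n => simp; ring
  have hPlow : ∑ τ ∈ A, X.wE τ * (f τ ^ 2 + f τ) ≤ pairW X.mGr U U := by
    rw [X.pairW_eq]
    simp only [Finset.inter_self, hnn]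
    exact Finset.sum_le_sum_of_subset_of_nonneg hAE
      fun τ _ _ => mul_nonneg (X.wE_nonneg τ) (by positivity)
  have hcs : S ^ 2 ≤ (∑ τ ∈ A, X.wE τ * f τ ^ 2) * X.wSet A := by
    rw [mul_comm]
    refine Finset.sum_sq_le_sum_mul_sum_of_sq_le_mul A (fun τ _ => X.wE_nonneg τ)
      (fun τ _ => mul_nonneg (X.wE_nonneg τ) (sq_nonneg _)) (fun τ _ => ?_)
    simp only [hf]; exact le_of_eq (by ring)
  have hP : S ^ 2 + S * X.wSet A ≤ pairW X.mGr U U * X.wSet A := by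
    have e : ∑ τ ∈ A, X.wE τ * (f τ ^ 2 + f τ) = (∑ τ ∈ A, X.wE τ * f τ ^ 2) + S := by
      rw [hSdef, ← Finset.sum_add_distrib]
      exact Finset.sum_congr rfl fun τ _ => by simp only [hf]; ring
    rw [e] at hPlow
    nlinarith
  have hPW : pairW X.mGr U U * X.wSet X.E ≤
      lamgr * ((X.k : ℝ) - 1) * b * X.wSet X.E + b ^ 2 := by
    generalize pairW X.mGr U U = P at *
    generalize X.wSet X.E = W at *
    have h1 : (P * W) * ((X.k - 1) * X.k) ≤
        (lamgr * ((X.k : ℝ) - 1) * b * W + b ^ 2) * ((X.k - 1) * X.k) := by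
      have h2 : (X.k - 1) * (X.k - 1) * b ^ 2 ≤ (X.k - 1) * (X.k : ℝ) * b ^ 2 := by
        gcongr; linarith
      nlinarith
    exact le_of_mul_le_mul_right h1 (by positivity)
  have hb : b ≤ ((X.s : ℝ) - 1) / μ * (X.wSet A + S) := by
    have h1 : μ * b ≤ (X.s - 1) * ∑ τ ∈ A, X.wE τ * ((τ ∩ U).card : ℝ) := by
      rw [hbdef, X.sum_card_swap, X.sum_card_swap, Finset.mul_sum, Finset.mul_sum]
      exact Finset.sum_le_sum fun v hv => X.large_bound A hAE μ hμ0 v (hU hv)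
    have h2 : ∑ τ ∈ A, X.wE τ * ((τ ∩ U).card : ℝ) ≤ X.wSet A + S := by
      rw [hSdef, TwoLayer.wSet, ← Finset.sum_add_distrib]
      refine Finset.sum_le_sum fun τ _ => ?_
      have h3 : ((τ ∩ U).card : ℝ) ≤ 1 + (((τ ∩ U).card - 1 : ℕ) : ℝ) := by
        have : (τ ∩ U).card ≤ 1 + ((τ ∩ U).card - 1) := by omega
        exact_mod_cast this
      have := X.wE_nonneg τ
      nlinarith
    rw [div_mul_eq_mul_div, le_div_iff₀ hμ0]
    nlinarith
  have hs3 : (8 : ℝ) ≤ (X.s : ℝ) ^ 3 := by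
    have : (2 : ℝ) ^ 3 ≤ (X.s : ℝ) ^ 3 := by gcongr
    linarith
  have hδ : (((X.s : ℝ) - 1) / μ) ^ 2 * (X.wSet A / X.wSet X.E) ≤ 1 / 2 := by
    have hsp : 0 < (X.s : ℝ) - 1 := by linarith
    calc _ ≤ (((X.s : ℝ) - 1) / μ) ^ 2 * (4 * μ ^ 2 / ((X.s : ℝ) ^ 3 * ((X.s : ℝ) - 1) ^ 2)) := by
          gcongr
      _ = 4 / (X.s : ℝ) ^ 3 := by field_simp
      _ ≤ 1 / 2 := by
          rw [div_le_div_iff₀ (by positivity) (by norm_num)]; linarith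
  have hc0 : 0 ≤ ((X.s : ℝ) - 1) / μ := by positivity
  have key := final_ineq S (X.wSet A) (X.wSet X.E) (pairW X.mGr U U) b (((X.s : ℝ) - 1) / μ)
    ((X.k : ℝ) - 1) lamgr hS0 hNpos hWpos hk1 hc0 hlamgr hb0 hb hP hPW hδ
  have e1 : (X.s : ℝ) * ((X.s : ℝ) - 1) * ((X.k : ℝ) - 1) / (2 * μ) * lamgr =
      (X.s : ℝ) / 2 * (lamgr * ((X.k : ℝ) - 1) * (((X.s : ℝ) - 1) / μ)) := by
    field_simp
  have e2 : (X.s : ℝ) ^ 3 * ((X.s : ℝ) - 1) ^ 2 / (4 * μ ^ 2) * (X.wSet A / X.wSet X.E) =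
      (X.s : ℝ) ^ 3 / 4 * ((((X.s : ℝ) - 1) / μ) ^ 2 * (X.wSet A / X.wSet X.E)) := by
    field_simp
  rw [e1, e2]
  have hL : 0 ≤ lamgr * ((X.k : ℝ) - 1) * (((X.s : ℝ) - 1) / μ) := by positivity
  have hD : 0 ≤ (((X.s : ℝ) - 1) / μ) ^ 2 * (X.wSet A / X.wSet X.E) := by positivity
  have hx : 0 ≤ S / X.wSet A := by positivity
  exact final_arith _ _ _ _ hs' hs3 hL hD hx key
end
end

section
/- (Links lemma.) Let λ_loc ≥ 0 and let X be an (s,k,K)-two-layer system such that the link of every vertex is a λ_loc-expander. Let A ⊆ E be nonempty, 0 < μ < 1, and U ⊆ V_{μ-small} (with respect to A). For 0 ≤ i ≤ k set A_U^i = {τ ∈ A : |τ ∩ U| = i}. Then (s−1)·(λ_loc + μ)·Σ_{i=1}^{k} i·w(A_U^i) ≥ Σ_{v∈U} m_v(A_v, A_v). -/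
open Finset

noncomputable section
open scoped Classical

theorem aux_graph {α : Type*} (m : α → α → ℝ) (vs B : Finset α) (lam μ : ℝ)
    (hm : ∀ a b, 0 ≤ m a b) (hpos : ∀ a ∈ vs, 0 < degOn m vs a) (hlam : 0 ≤ lam)
    (hμ0 : 0 < μ) (hμ1 : μ < 1) (hexp : IsExpanderOn m vs lam) (hB : B ⊆ vs)
    (hsmall : vertOn m vs B / vertOn m vs vs < μ) :
    pairW m B B ≤ (lam + μ) * vertOn m vs B := by
  have hvpos : ∀ C : Finset α, C ⊆ vs → C.Nonempty → 0 < vertOn m vs C := fun C hC hne =>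
    Finset.sum_pos (fun a ha => hpos a (hC ha)) hne
  have hpn : ∀ C D : Finset α, 0 ≤ pairW m C D := fun C D =>
    Finset.sum_nonneg fun _ _ => Finset.sum_nonneg fun _ _ => hm _ _
  have hdn : ∀ C : Finset α, 0 ≤ vertOn m vs C := fun C =>
    Finset.sum_nonneg fun _ _ => Finset.sum_nonneg fun _ _ => hm _ _
  rcases B.eq_empty_or_nonempty with rfl | hne
  · simp [pairW, vertOn]
  have hvs : vs.Nonempty := hne.mono hB
  have hM := hvpos vs subset_rfl hvs
  have hBvs : B ≠ vs := by
    rintro rfl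
    rw [div_self hM.ne'] at hsmall
    linarith
  have hb := hvpos B hB hne
  have hcne : (vs \ B).Nonempty := by
    rw [Finset.sdiff_nonempty]
    exact fun h => hBvs (hB.antisymm h)
  have hc := hvpos (vs \ B) Finset.sdiff_subset hcne
  have hsum : vertOn m vs (vs \ B) + vertOn m vs B = vertOn m vs vs :=
    Finset.sum_sdiff hB
  have hpair : pairW m B (vs \ B) + pairW m B B = vertOn m vs B := by
    unfold pairW vertOn degOn
    rw [← Finset.sum_add_distrib]
    exact Finset.sum_congr rfl fun a _ => Finset.sum_sdiff hB
  have hh : cheegerOn m vs ≤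
      pairW m B (vs \ B) * vertOn m vs vs / (vertOn m vs B * vertOn m vs (vs \ B)) := by
    unfold cheegerOn
    apply csInf_le
    · refine ⟨0, ?_⟩
      rintro x ⟨C, _, _, _, rfl⟩
      exact div_nonneg (mul_nonneg (hpn _ _) (hdn _)) (mul_nonneg (hdn _) (hdn _))
    · exact ⟨B, hB, hne, hBvs, rfl⟩
  unfold IsExpanderOn at hexp
  have h1 : 1 - lam ≤
      pairW m B (vs \ B) * vertOn m vs vs / (vertOn m vs B * vertOn m vs (vs \ B)) := by
    linarith
  rw [le_div_iff₀ (mul_pos hb hc)] at h1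
  rw [div_lt_iff₀ hM] at hsmall
  generalize vertOn m vs B = b at *
  generalize vertOn m vs vs = M at *
  generalize vertOn m vs (vs \ B) = c at *
  generalize pairW m B (vs \ B) = p at *
  generalize pairW m B B = q at *
  have h2 : q * M ≤ ((lam + μ) * b) * M := by
    have e1 : c = M - b := by linarith
    have e2 : q = b - p := by linarith
    subst e1 e2
    nlinarith [mul_nonneg hlam (mul_pos hb hb).le, mul_lt_mul_of_pos_left hsmall hb]
  exact le_of_mul_le_mul_right h2 hM

section aux
variable {V : Type*} [Fintype V] [DecidableEq V] (X : TwoLayer V)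

theorem aux_mLk_nonneg (v : V) (a b : Finset V) : 0 ≤ X.mLk v a b := by
  unfold TwoLayer.mLk
  split_ifs
  · exact Finset.sum_nonneg fun σ hσ => (X.w0_pos σ (Finset.mem_filter.1 hσ).1).le
  · exact le_rfl

theorem aux_deg (v : V) (τ : Finset V) (hτ : τ ∈ X.Ev v) :
    degOn (X.mLk v) (X.Ev v) τ =
      ∑ σ ∈ X.T.filter (fun σ => τ ∈ σ),
        (((σ.filter (fun τ => v ∈ τ)).card : ℝ) - 1) * X.w0 σ := by
  have hvτ : v ∈ τ := (Finset.mem_filter.1 hτ).2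
  have key : ∀ σ ∈ X.T.filter (fun σ => τ ∈ σ),
      (((σ.filter (fun τ => v ∈ τ)).card : ℝ) - 1) * X.w0 σ
        = ∑ τ' ∈ X.Ev v, if τ ≠ τ' ∧ τ' ∈ σ then X.w0 σ else 0 := by
    intro σ hσ
    obtain ⟨hT, hτσ⟩ := Finset.mem_filter.1 hσ
    rw [← Finset.sum_filter, Finset.sum_const, nsmul_eq_mul]
    congr 1
    have : (X.Ev v).filter (fun τ' => τ ≠ τ' ∧ τ' ∈ σ)
        = (σ.filter (fun τ => v ∈ τ)).erase τ := by
      ext τ'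
      simp only [TwoLayer.Ev, Finset.mem_filter, Finset.mem_erase]
      have := X.sub_of_mem_T σ hT τ'
      constructor
      · rintro ⟨⟨_, h1⟩, h2, h3⟩
        exact ⟨fun h => h2 h.symm, h3, h1⟩
      · rintro ⟨h2, h3, h1⟩
        exact ⟨⟨this h3, h1⟩, fun h => h2 h.symm, h3⟩
    rw [this, Finset.card_erase_of_mem (Finset.mem_filter.2 ⟨hτσ, hvτ⟩), Nat.cast_sub, Nat.cast_one]
    exact Finset.card_pos.2 ⟨τ, Finset.mem_filter.2 ⟨hτσ, hvτ⟩⟩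
  rw [Finset.sum_congr rfl key, Finset.sum_comm]
  unfold degOn
  refine Finset.sum_congr rfl fun τ' hτ' => ?_
  unfold TwoLayer.mLk
  rw [← Finset.sum_filter, Finset.filter_filter]
  by_cases h : τ = τ'
  · simp [h]
  · rw [if_pos ⟨h, hτ, hτ'⟩]
    refine Finset.sum_congr ?_ fun _ _ => rfl
    ext σ
    simp [h]

theorem aux_deg_pos (v : V) (τ : Finset V) (hτ : τ ∈ X.Ev v) :
    0 < degOn (X.mLk v) (X.Ev v) τ := by
  rw [aux_deg X v τ hτ]
  obtain ⟨hE, hv⟩ := Finset.mem_filter.1 hτ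
  obtain ⟨σ, hσ, hτσ⟩ := X.cover_E τ hE
  refine Finset.sum_pos (fun σ hσ => ?_) ⟨σ, Finset.mem_filter.2 ⟨hσ, hτσ⟩⟩
  obtain ⟨hT, hτσ⟩ := Finset.mem_filter.1 hσ
  have h2 : (2 : ℝ) ≤ ((σ.filter (fun τ => v ∈ τ)).card : ℝ) := by
    exact_mod_cast X.deg_lb σ hT v ⟨τ, hτσ, hv⟩
  exact mul_pos (by linarith) (X.w0_pos σ hT)

theorem aux_deg_le (v : V) (τ : Finset V) (hτ : τ ∈ X.Ev v) :
    degOn (X.mLk v) (X.Ev v) τ ≤ ((X.s : ℝ) - 1) * X.wE τ := by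
  rw [aux_deg X v τ hτ]
  obtain ⟨hE, hv⟩ := Finset.mem_filter.1 hτ
  unfold TwoLayer.wE
  rw [Finset.mul_sum]
  refine Finset.sum_le_sum fun σ hσ => ?_
  obtain ⟨hT, hτσ⟩ := Finset.mem_filter.1 hσ
  have h2 : ((σ.filter (fun τ => v ∈ τ)).card : ℝ) ≤ (X.s : ℝ) := by
    exact_mod_cast X.deg_ub σ hT v ⟨τ, hτσ, hv⟩
  exact mul_le_mul_of_nonneg_right (by linarith) (X.w0_pos σ hT).le

theorem aux_count (A : Finset (Finset V)) (hAE : A ⊆ X.E) (U : Finset V) :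
    ∑ i ∈ Finset.Icc 1 X.k, (i : ℝ) * X.wSet (A.filter (fun τ => (τ ∩ U).card = i))
      = ∑ v ∈ U, ∑ τ ∈ A.filter (fun τ => v ∈ τ), X.wE τ := by
  have h1 : ∑ v ∈ U, ∑ τ ∈ A.filter (fun τ => v ∈ τ), X.wE τ
      = ∑ τ ∈ A, ((τ ∩ U).card : ℝ) * X.wE τ := by
    simp_rw [Finset.sum_filter]
    rw [Finset.sum_comm]
    refine Finset.sum_congr rfl fun τ _ => ?_
    rw [← Finset.sum_filter, Finset.sum_const, nsmul_eq_mul, Finset.filter_mem_eq_inter,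
      Finset.inter_comm]
  rw [h1]
  unfold TwoLayer.wSet
  simp_rw [Finset.sum_filter, Finset.mul_sum]
  rw [Finset.sum_comm]
  refine Finset.sum_congr rfl fun τ hτ => ?_
  have hk : (τ ∩ U).card ≤ X.k := by
    rw [← X.card_of_mem_E τ (hAE hτ)]
    exact Finset.card_le_card Finset.inter_subset_left
  simp only [mul_ite, mul_zero]
  rw [Finset.sum_ite_eq]
  split_ifs with h
  · rfl
  · have : (τ ∩ U).card = 0 := by
      rw [Finset.mem_Icc] at h
      omega
    simp [this]

end aux

/-- Lemma 4.10, links lemma. -/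
theorem stmt14 {V : Type*} [Fintype V] [DecidableEq V] (X : TwoLayer V)
    (lamloc : ℝ) (hlamloc : 0 ≤ lamloc)
    (hexp : ∀ v : V, IsExpanderOn (X.mLk v) (X.Ev v) lamloc)
    (A : Finset (Finset V)) (hAE : A ⊆ X.E) (hA : A.Nonempty)
    (μ : ℝ) (hμ0 : 0 < μ) (hμ1 : μ < 1)
    (U : Finset V) (hU : ∀ v ∈ U, v ∉ X.VLarge A μ) :
    ∑ v ∈ U, pairW (X.mLk v) (A ∩ X.Ev v) (A ∩ X.Ev v)
      ≤ ((X.s : ℝ) - 1) * (lamloc + μ) *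
          ∑ i ∈ Finset.Icc 1 X.k,
            (i : ℝ) * X.wSet (A.filter (fun τ => (τ ∩ U).card = i)) := by
  rw [aux_count X A hAE U, Finset.mul_sum]
  refine Finset.sum_le_sum fun v hv => ?_
  have hs := hU v hv
  simp only [TwoLayer.VLarge, Finset.mem_filter, Finset.mem_univ, true_and, not_le] at hs
  have h1 := aux_graph (X.mLk v) (X.Ev v) (A ∩ X.Ev v) lamloc μ (aux_mLk_nonneg X v)
    (aux_deg_pos X v) hlamloc hμ0 hμ1 (hexp v) Finset.inter_subset_right hs
  refine h1.trans ?_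
  have h2 : vertOn (X.mLk v) (X.Ev v) (A ∩ X.Ev v) ≤
      ((X.s : ℝ) - 1) * ∑ τ ∈ A.filter (fun τ => v ∈ τ), X.wE τ := by
    have e : A ∩ X.Ev v = A.filter (fun τ => v ∈ τ) := by
      ext τ
      simp only [TwoLayer.Ev, Finset.mem_inter, Finset.mem_filter]
      exact ⟨fun h => ⟨h.1, h.2.2⟩, fun h => ⟨h.1, hAE h.1, h.2⟩⟩
    rw [Finset.mul_sum, e]
    refine Finset.sum_le_sum fun τ hτ => aux_deg_le X v τ ?_
    obtain ⟨ha, hb⟩ := Finset.mem_filter.1 hτ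
    exact Finset.mem_filter.2 ⟨hAE ha, hb⟩
  calc _ ≤ (lamloc + μ) * (((X.s : ℝ) - 1) * ∑ τ ∈ A.filter (fun τ => v ∈ τ), X.wE τ) :=
        mul_le_mul_of_nonneg_left h2 (by linarith)
    _ = _ := by ring
end
end

section
/- (Sampling in bipartite graphs.) Let (V,E) be a connected finite bipartite weighted graph with V = V₁ ∪ V₂ and weight function m, and let λ be such that ‖Mφ‖ ≤ λ·‖φ‖ for every φ ∈ ℓ²(V) orthogonal to both indicator functions 𝟙_{V₁} and 𝟙_{V₂} (in particular this holds for λ the spectral expansion of the graph). Fix a nonempty U ⊆ V₁ and let N(U) = {v ∈ V₂ : ∃ u ∈ U, {u,v} ∈ E}. For 0 < α < 1 let N(U)_{≥α} be the set of v ∈ N(U) such that | m({{u,v} : u ∈ U})/m(v) − m(U)/m(V₁) | ≥ α. Then m(N(U)_{≥α}) ≤ (λ²/α²)·m(U). -/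
open Finset

noncomputable section
open scoped Classical

/-- Lemma 7.8, sampling in bipartite graphs. -/
theorem stmt17 {α : Type*} [Fintype α] [DecidableEq α] (m : α → α → ℝ)
    (hsymm : ∀ u v : α, m u v = m v u) (hnonneg : ∀ u v : α, 0 ≤ m u v)
    (hdiag : ∀ v : α, m v v = 0)
    (V₁ : Finset α)
    (hbip : ∀ u v : α, m u v ≠ 0 → (u ∈ V₁ ↔ v ∉ V₁))
    (hconn : (SimpleGraph.fromRel (fun u v => m u v ≠ 0)).Connected)
    (lam : ℝ) (hlam : 0 ≤ lam)
    (hspec : ∀ φ : α → ℝ,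
      iprodK m φ (fun v => if v ∈ V₁ then 1 else 0) = 0 →
      iprodK m φ (fun v => if v ∈ V₁ then 0 else 1) = 0 →
      iprodK m (walkK m φ) (walkK m φ) ≤ lam ^ 2 * iprodK m φ φ)
    (U : Finset α) (hUV : U ⊆ V₁) (hU : U.Nonempty)
    (a : ℝ) (ha0 : 0 < a) (ha1 : a < 1) :
    vertOn m Finset.univ
        (((Finset.univ \ V₁).filter (fun v => ∃ u ∈ U, m u v ≠ 0)).filter (fun v =>
          a ≤ |(∑ u ∈ U, m u v) / degOn m Finset.univ v -
                vertOn m Finset.univ U / vertOn m Finset.univ V₁|))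
      ≤ lam ^ 2 / a ^ 2 * vertOn m Finset.univ U := by
  set c : ℝ := vertOn m Finset.univ U / vertOn m Finset.univ V₁ with hc
  have hdeg : ∀ v, 0 ≤ degOn m Finset.univ v := fun v =>
    Finset.sum_nonneg (fun u _ => hnonneg v u)
  have hU0 : 0 ≤ vertOn m Finset.univ U := Finset.sum_nonneg (fun v _ => hdeg v)
  have hV0 : 0 ≤ vertOn m Finset.univ V₁ := Finset.sum_nonneg (fun v _ => hdeg v)
  have hUle : vertOn m Finset.univ U ≤ vertOn m Finset.univ V₁ :=
    Finset.sum_le_sum_of_subset_of_nonneg hUV (fun v _ _ => hdeg v)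
  have hc0 : 0 ≤ c := div_nonneg hU0 hV0
  have hcV : c * vertOn m Finset.univ V₁ = vertOn m Finset.univ U := by
    by_cases h : vertOn m Finset.univ V₁ = 0
    · rw [h, mul_zero]; linarith
    · rw [hc, div_mul_cancel₀ _ h]
  let φ : α → ℝ := fun v => (if v ∈ U then 1 else 0) - c * (if v ∈ V₁ then 1 else 0)
  have hsU : ∑ v, degOn m Finset.univ v * (if v ∈ U then 1 else 0) = vertOn m Finset.univ U := by
    simp [vertOn]
  have hsV : ∑ v, degOn m Finset.univ v * (if v ∈ V₁ then 1 else 0) = vertOn m Finset.univ V₁ := by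
    simp [vertOn]
  have h1 : iprodK m φ (fun v => if v ∈ V₁ then 1 else 0) = 0 := by
    have : iprodK m φ (fun v => if v ∈ V₁ then 1 else 0)
        = ∑ v, degOn m Finset.univ v * (if v ∈ U then 1 else 0)
          - c * ∑ v, degOn m Finset.univ v * (if v ∈ V₁ then 1 else 0) := by
      rw [Finset.mul_sum, ← Finset.sum_sub_distrib]
      refine Finset.sum_congr rfl (fun v _ => ?_)
      have := @hUV v
      change degOn m Finset.univ v * _ = _
      by_cases h : v ∈ U
      · simp [φ, h, this h]; ring
      · by_cases h' : v ∈ V₁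
        · simp [φ, h, h']; ring
        · simp [φ, h, h']
    rw [this, hsU, hsV, hcV, sub_self]
  have h2 : iprodK m φ (fun v => if v ∈ V₁ then 0 else 1) = 0 := by
    refine Finset.sum_eq_zero (fun v _ => ?_)
    by_cases h' : v ∈ V₁
    · simp [h']
    · have h : v ∉ U := fun h => h' (hUV h)
      simp [φ, h, h']
  have h3 : iprodK m φ φ = vertOn m Finset.univ U - c * vertOn m Finset.univ U := by
    have : iprodK m φ φ
        = (1 - 2 * c) * ∑ v, degOn m Finset.univ v * (if v ∈ U then 1 else 0)
          + c ^ 2 * ∑ v, degOn m Finset.univ v * (if v ∈ V₁ then 1 else 0) := by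
      rw [Finset.mul_sum, Finset.mul_sum, ← Finset.sum_add_distrib]
      refine Finset.sum_congr rfl (fun v _ => ?_)
      have := @hUV v
      change degOn m Finset.univ v * _ = _
      by_cases h : v ∈ U
      · simp [φ, h, this h]; ring
      · by_cases h' : v ∈ V₁
        · simp [φ, h, h']; ring
        · simp [φ, h, h']
    rw [this, hsU, hsV]
    linear_combination c * hcV
  have h4 := hspec φ h1 h2
  have h5 : iprodK m φ φ ≤ vertOn m Finset.univ U := by
    rw [h3]; linarith [mul_nonneg hc0 hU0]
  have h6 := h4.trans (mul_le_mul_of_nonneg_left h5 (sq_nonneg lam))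
  have ha2 : 0 < a ^ 2 := by positivity
  rw [div_mul_eq_mul_div, le_div_iff₀ ha2]
  refine le_trans ?_ h6
  rw [vertOn, Finset.sum_mul]
  unfold iprodK
  refine le_trans (Finset.sum_le_sum ?_) (Finset.sum_le_sum_of_subset_of_nonneg
    (Finset.subset_univ _) (fun v _ _ => mul_nonneg (hdeg v) (mul_self_nonneg _)))
  intro v hv
  simp only [Finset.mem_filter, Finset.mem_sdiff, Finset.mem_univ, true_and] at hv
  obtain ⟨⟨hvV, u, huU, huv⟩, hav⟩ := hv
  refine mul_le_mul_of_nonneg_left ?_ (hdeg v)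
  have hpos : 0 < degOn m Finset.univ v := by
    refine Finset.sum_pos' (fun u _ => hnonneg v u) ⟨u, Finset.mem_univ _, ?_⟩
    rw [hsymm v u]
    exact lt_of_le_of_ne (hnonneg u v) (Ne.symm huv)
  have hw : walkK m φ v = (∑ u ∈ U, m u v) / degOn m Finset.univ v - c := by
    have e : ∑ u, m v u * φ u = ∑ u ∈ U, m u v - c * degOn m Finset.univ v := by
      have e1 : ∑ u ∈ U, m u v = ∑ u, m v u * (if u ∈ U then 1 else 0) := by
        simp [hsymm v]
      rw [e1, degOn, Finset.mul_sum, ← Finset.sum_sub_distrib]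
      refine Finset.sum_congr rfl (fun w _ => ?_)
      by_cases h : m v w = 0
      · simp [h]
      · have hw : w ∈ V₁ := by
          by_contra h'
          exact hvV ((hbip v w h).2 h')
        simp only [φ, hw, if_true]; ring
    have : walkK m φ v = (∑ u, m v u * φ u) / degOn m Finset.univ v := rfl
    rw [this, e, sub_div, mul_div_cancel_right₀ _ hpos.ne']
  rw [hw, ← sq, ← sq_abs (_ - c)]
  exact pow_le_pow_left₀ ha0.le hav 2
end
end

section
/- Let (V,E) be a connected finite bipartite weighted graph with V = V₁ ∪ V₂ and weight function m, and let λ be such that ‖Mφ‖ ≤ λ·‖φ‖ for every φ ∈ ℓ²(V) orthogonal to both 𝟙_{V₁} and 𝟙_{V₂}. Let U ⊆ V₁ be nonempty, N(U) = {v ∈ V₂ : ∃ u ∈ U, {u,v} ∈ E}, fix 0 < δ < 1, and let W ⊆ N(U) be such that for every u ∈ U, (Σ_{v∈W, {u,v}∈E} m({v,u})) / m(u) ≥ δ. Then m(U)/m(W) ≤ (4/(3δ)) · ( 2λ/√δ + m(U)/m(V₁) ). -/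
open Finset

noncomputable section
open scoped Classical

/-- Lemma 7.9. -/
theorem stmt18 {α : Type*} [Fintype α] [DecidableEq α] (m : α → α → ℝ)
    (hsymm : ∀ u v : α, m u v = m v u) (hnonneg : ∀ u v : α, 0 ≤ m u v)
    (hdiag : ∀ v : α, m v v = 0)
    (V₁ : Finset α)
    (hbip : ∀ u v : α, m u v ≠ 0 → (u ∈ V₁ ↔ v ∉ V₁))
    (hconn : (SimpleGraph.fromRel (fun u v => m u v ≠ 0)).Connected)
    (lam : ℝ) (hlam : 0 ≤ lam)
    (hspec : ∀ φ : α → ℝ,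
      iprodK m φ (fun v => if v ∈ V₁ then 1 else 0) = 0 →
      iprodK m φ (fun v => if v ∈ V₁ then 0 else 1) = 0 →
      iprodK m (walkK m φ) (walkK m φ) ≤ lam ^ 2 * iprodK m φ φ)
    (U : Finset α) (hUV : U ⊆ V₁) (hU : U.Nonempty)
    (d : ℝ) (hd0 : 0 < d) (hd1 : d < 1)
    (W : Finset α) (hW : W ⊆ (Finset.univ \ V₁).filter (fun v => ∃ u ∈ U, m u v ≠ 0))
    (hWdeg : ∀ u ∈ U, d ≤ (∑ v ∈ W, m u v) / degOn m Finset.univ u) :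
    vertOn m Finset.univ U / vertOn m Finset.univ W
      ≤ 4 / (3 * d) *
          (2 * lam / Real.sqrt d + vertOn m Finset.univ U / vertOn m Finset.univ V₁) := by
  have hD0 : ∀ v, 0 ≤ ∑ u, m v u := fun v => Finset.sum_nonneg (fun u _ => hnonneg v u)
  have hDU : ∀ u ∈ U, 0 < ∑ v, m u v := by
    intro u hu
    rcases (hD0 u).lt_or_eq with h | h
    · exact h
    · have := hWdeg u hu
      unfold degOn at this
      rw [← h, div_zero] at this
      linarith
  unfold vertOn degOn at *
  set a := ∑ v ∈ U, ∑ u, m v u with ha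
  set b := ∑ v ∈ W, ∑ u, m v u with hb
  set n := ∑ v ∈ V₁, ∑ u, m v u with hn
  have hapos : 0 < a := Finset.sum_pos hDU hU
  have han : a ≤ n := Finset.sum_le_sum_of_subset_of_nonneg hUV (fun v _ _ => hD0 v)
  have hnpos : 0 < n := lt_of_lt_of_le hapos han
  set e := ∑ w ∈ W, ∑ u ∈ U, m w u with he
  have hde : d * a ≤ e := by
    rw [he, Finset.sum_comm, ha, Finset.mul_sum]
    apply Finset.sum_le_sum
    intro u hu
    have h := hWdeg u hu
    rw [le_div_iff₀ (hDU u hu)] at h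
    refine h.trans (le_of_eq (Finset.sum_congr rfl (fun v _ => hsymm u v)))
  have heb : e ≤ b := by
    apply Finset.sum_le_sum
    intro w _
    exact Finset.sum_le_sum_of_subset_of_nonneg (Finset.subset_univ U) (fun v _ _ => hnonneg w v)
  have hbpos : 0 < b := by nlinarith [mul_pos hd0 hapos]
  have key : (e - a / n * b) ^ 2 ≤ lam ^ 2 * a * b := by
    set φ : α → ℝ := fun v => (if v ∈ U then 1 else 0) - a / n * (if v ∈ V₁ then 1 else 0) with hφ
    have h1 : iprodK m φ (fun v => if v ∈ V₁ then 1 else 0) = 0 := by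
      have : ∀ v, (∑ u, m v u) * (φ v * (if v ∈ V₁ then 1 else 0)) =
          (if v ∈ U then ∑ u, m v u else 0) - a / n * (if v ∈ V₁ then ∑ u, m v u else 0) := by
        intro v
        by_cases h : v ∈ U
        · have := hUV h
          simp [hφ, h, this]; ring
        · by_cases h' : v ∈ V₁ <;> simp [hφ, h, h']; ring
      unfold iprodK
      rw [Finset.sum_congr rfl (fun v _ => this v), Finset.sum_sub_distrib, ← Finset.mul_sum]
      simp only [Finset.sum_ite_mem, Finset.univ_inter]
      rw [← ha, ← hn]
      field_simp
      ring
    have h2 : iprodK m φ (fun v => if v ∈ V₁ then 0 else 1) = 0 := by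
      unfold iprodK
      apply Finset.sum_eq_zero
      intro v _
      by_cases h' : v ∈ V₁
      · simp [h']
      · have : v ∉ U := fun h => h' (hUV h)
        simp [hφ, h', this]
    have h3 : iprodK m φ φ = a - a / n * a := by
      have : ∀ v, (∑ u, m v u) * (φ v * φ v) =
          (1 - 2 * (a / n)) * (if v ∈ U then ∑ u, m v u else 0)
            + (a / n) ^ 2 * (if v ∈ V₁ then ∑ u, m v u else 0) := by
        intro v
        by_cases h : v ∈ U
        · have := hUV h
          simp [hφ, h, this]; ring
        · by_cases h' : v ∈ V₁ <;> simp [hφ, h, h']; ring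
      unfold iprodK
      rw [Finset.sum_congr rfl (fun v _ => this v), Finset.sum_add_distrib, ← Finset.mul_sum,
        ← Finset.mul_sum]
      simp only [Finset.sum_ite_mem, Finset.univ_inter]
      rw [← ha, ← hn]
      field_simp
      ring
    have h4 := hspec φ h1 h2
    have h5 : e - a / n * b = ∑ w ∈ W, (∑ u, m w u) * walkK m φ w := by
      rw [he, hb, Finset.mul_sum, ← Finset.sum_sub_distrib]
      apply Finset.sum_congr rfl
      intro w hw
      have hw1 : w ∉ V₁ := by
        have := hW hw
        simp at this
        exact this.1
      have hw2 : (∑ u, m w u) * walkK m φ w = ∑ u, m w u * φ u := by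
        unfold walkK
        by_cases h0 : (∑ u, m w u) = 0
        · have : ∀ u, m w u = 0 := by
            intro u
            exact (Finset.sum_eq_zero_iff_of_nonneg (fun u _ => hnonneg w u)).1 h0 u
              (Finset.mem_univ u)
          simp [this]
        · field_simp
      rw [hw2]
      have : ∀ u, m w u * φ u = (if u ∈ U then m w u else 0) - a / n * m w u := by
        intro u
        by_cases h0 : m w u = 0
        · simp [h0]
        · have h6 : u ∈ V₁ := by
            have := hbip w u h0
            tauto
          by_cases h : u ∈ U <;> simp [hφ, h, h6] <;> ring
      rw [Finset.sum_congr rfl (fun u _ => this u), Finset.sum_sub_distrib, ← Finset.mul_sum]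
      simp only [Finset.sum_ite_mem, Finset.univ_inter]
    have h6 : (e - a / n * b) ^ 2 ≤
        b * ∑ w ∈ W, (∑ u, m w u) * (walkK m φ w * walkK m φ w) := by
      rw [h5, hb]
      apply Finset.sum_sq_le_sum_mul_sum_of_sq_eq_mul
      · exact fun w _ => hD0 w
      · exact fun w _ => mul_nonneg (hD0 w) (mul_self_nonneg _)
      · intro w _; ring
    have h7 : ∑ w ∈ W, (∑ u, m w u) * (walkK m φ w * walkK m φ w)
        ≤ iprodK m (walkK m φ) (walkK m φ) :=
      Finset.sum_le_sum_of_subset_of_nonneg (Finset.subset_univ W)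
        (fun w _ _ => mul_nonneg (hD0 w) (mul_self_nonneg _))
    have h8 : iprodK m φ φ ≤ a := by
      rw [h3]
      have : 0 ≤ a / n * a := by positivity
      linarith
    calc _ ≤ _ := h6
      _ ≤ b * (lam ^ 2 * a) := by
        apply mul_le_mul_of_nonneg_left _ hbpos.le
        exact h7.trans (h4.trans (mul_le_mul_of_nonneg_left h8 (sq_nonneg _)))
      _ = _ := by ring
  clear_value a b n e
  obtain ⟨s, hs⟩ : ∃ s, s = Real.sqrt d := ⟨_, rfl⟩
  have hspos : 0 < s := hs ▸ Real.sqrt_pos.2 hd0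
  have hsd : d = s ^ 2 := by rw [hs, Real.sq_sqrt hd0.le]
  rw [← hs]
  have hc : 0 ≤ a / n := by positivity
  obtain ⟨l, hl⟩ : ∃ l, l = lam / s := ⟨_, rfl⟩
  have hl0 : 0 ≤ l := by rw [hl]; positivity
  have hll : lam = l * s := by rw [hl]; field_simp
  have hls : 2 * lam / s = 2 * l := by rw [hl]; ring
  rw [hls]
  generalize a / n = c at *
  suffices h : 3 / 4 * (d * a) ≤ (2 * l + c) * b by
    rw [div_le_iff₀ hbpos, div_mul_eq_mul_div, div_mul_eq_mul_div, le_div_iff₀ (by positivity)]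
    linarith
  rcases le_total l 2 with h | h
  · have ht : e - c * b ≤ d * a / 4 + l ^ 2 * b := by
      apply le_of_abs_le
      apply abs_le_of_sq_le_sq _ (by positivity)
      refine key.trans ?_
      rw [hll, hsd]
      nlinarith [sq_nonneg (s ^ 2 * a / 4 - l ^ 2 * b)]
    nlinarith [mul_nonneg (mul_nonneg hl0 (sub_nonneg.2 h)) hbpos.le]
  · nlinarith [mul_nonneg hc hbpos.le, mul_nonneg (sub_nonneg.2 h) hbpos.le, mul_pos hd0 hapos]
end
end
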